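/- arXiv:math/0107071 — 6 statements merged into one kernel-verified Lean document; each statement's English description precedes it below -/
import Mathlib

section
/- Let G be a countable abelian group written as the union of an increasing sequence of finitely generated subgroups G₀ ⊆ G₁ ⊆ G₂ ⊆ ⋯, and let H be any abelian group. Then there is an isomorphism of abelian groups between Pext¹(G,H) = ⋂_{n≥1} n·Ext¹(G,H) and lim¹_i Hom(G_i,H), i.e. the cokernel of the Eilenberg map Ψ : ∏_i Hom(G_i,H) → ∏_i Hom(G_i,H). -/
open CategoryTheory DirectSum

/-- `Ext¹(G,H)`: the Ext group `Ext¹_ℤ(G,H)` of abelian groups (ℤ-modules). -/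
noncomputable abbrev Ext1 (G H : Type) [AddCommGroup G] [AddCommGroup H] : Type :=
  ((_root_.Ext ℤ (ModuleCat.{0} ℤ) 1).obj (Opposite.op (ModuleCat.of ℤ G))).obj (ModuleCat.of ℤ H)

/-- `Pext¹(G,H) = ⋂_{n ≥ 1} n · Ext¹(G,H)`. -/
noncomputable def Pext1 (G H : Type) [AddCommGroup G] [AddCommGroup H] :
    AddSubgroup (Ext1 G H) :=
  ⨅ (n : ℕ) (_ : 1 ≤ n), (n • AddMonoidHom.id (Ext1 G H)).range

/-- The Eilenberg map `Ψ : ∏_i Hom(G_i,H) → ∏_i Hom(G_i,H)`,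
`Ψ(f)_i = f_i − f_{i+1} ∘ ι_i` where `ι_i : G_i ↪ G_{i+1}` is the inclusion. -/
noncomputable def eilenberg (G H : Type) [AddCommGroup G] [AddCommGroup H]
    (Gs : ℕ → AddSubgroup G) (hmono : Monotone Gs) :
    (∀ i, ↥(Gs i) →+ H) →+ (∀ i, ↥(Gs i) →+ H) :=
  AddMonoidHom.mk'
    (fun f i => f i - (f (i + 1)).comp (AddSubgroup.inclusion (hmono (Nat.le_succ i))))
    (by
      intro a b
      funext i
      simp [AddMonoidHom.add_comp]
      abel)


/-- Order-preserving lifts along `p`. -/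
def JLifts {X A : Type} [AddCommGroup X] [AddCommGroup A] (p : X →+ A) : Prop :=
  ∀ a : A, ∃ x : X, p x = a ∧ ∀ n : ℕ, n • a = 0 → n • x = 0

/-- Every map with order-preserving lifts onto `A` has a section. -/
def JSplit (A : Type) [AddCommGroup A] : Prop :=
  ∀ (X : Type) [AddCommGroup X] (p : X →+ A), JLifts p → ∃ s : A →+ X, ∀ a, p (s a) = a

theorem j_zmod_baer (n : ℕ) (hn : 0 < n) (I : Type) : Module.Baer (ZMod n) (I →₀ ZMod n) := by
  intro J g
  obtain ⟨d, hd⟩ := (IsPrincipalIdealRing.principal (J.comap (Int.castRingHom (ZMod n)))).principal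
  have hdJ : ∀ z : ℤ, (z : ZMod n) ∈ J ↔ d ∣ z := by
    intro z
    have : z ∈ J.comap (Int.castRingHom (ZMod n)) ↔ d ∣ z := by
      rw [hd]; exact Ideal.mem_span_singleton
    simpa using this
  have hdn : d ∣ (n : ℤ) := (hdJ n).1 (by simp)
  obtain ⟨e, he⟩ := hdn
  have hdm : (d : ZMod n) ∈ J := (hdJ d).2 dvd_rfl
  have he0 : e ≠ 0 := by rintro rfl; simp at he; omega
  set v := g ⟨d, hdm⟩ with hv
  have hev : (e : ZMod n) • v = 0 := by
    rw [hv, ← map_smul]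
    have : ((e : ZMod n) • (⟨d, hdm⟩ : J)) = 0 := by
      ext
      have : ((d * e : ℤ) : ZMod n) = 0 := by rw [← he]; simp
      push_cast at this
      simpa [mul_comm] using this
    rw [this, map_zero]
  have hdiv : ∀ x : ZMod n, (e : ZMod n) * x = 0 → ∃ w : ZMod n, x = d * w := by
    intro x hx
    obtain ⟨z, rfl⟩ := ZMod.intCast_surjective x
    rw [← Int.cast_mul, ZMod.intCast_zmod_eq_zero_iff_dvd, he, mul_comm d e] at hx
    obtain ⟨w, rfl⟩ := Int.dvd_of_mul_dvd_mul_left he0 hx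
    exact ⟨w, by push_cast; rfl⟩
  have hw : ∃ w : I →₀ ZMod n, v = (d : ZMod n) • w := by
    classical
    have : ∀ i, ∃ w : ZMod n, v i = d * w := fun i => hdiv _ (by simpa using DFunLike.congr_fun hev i)
    choose w hw using this
    refine ⟨Finsupp.onFinset v.support (fun i => if v i = 0 then 0 else w i) ?_, ?_⟩
    · intro i hi; by_contra h; simp at h; simp [h] at hi
    · ext i
      by_cases h : v i = 0
      · simp [h]
      · simp [h, ← hw]
  obtain ⟨w, hw⟩ := hw
  refine ⟨LinearMap.toSpanSingleton _ _ w, fun x mem => ?_⟩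
  obtain ⟨z, rfl⟩ := ZMod.intCast_surjective x
  obtain ⟨c, rfl⟩ := (hdJ z).1 mem
  have : (⟨((d * c : ℤ) : ZMod n), mem⟩ : J) = (c : ZMod n) • ⟨d, hdm⟩ := by
    ext; simp [mul_comm]
  rw [this, map_smul, ← hv, hw, smul_smul]
  simp [mul_comm]

theorem j_zmod_hom {X : Type} [AddCommGroup X] (n : ℕ) (x : X) (hx : n • x = 0) :
    ∃ f : ZMod n →+ X, ∀ z : ℤ, f (z : ZMod n) = z • x :=
  ⟨ZMod.lift n ⟨zmultiplesHom X x, by simpa using hx⟩, fun z => by simp⟩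

theorem j_split_step (n : ℕ) (h1 : 1 < n) (A : Type) [AddCommGroup A] (inst : Module (ZMod n) A)
    (hA : ∀ a : A, n • a = 0)
    (ih : ∀ m : ℕ, m < n → 0 < m → ∀ (A : Type) [AddCommGroup A], (∀ a : A, m • a = 0) → JSplit A) :
    JSplit A := by
  intro X _ p hp
  have hn : 0 < n := by omega
  have : Fact (1 < n) := ⟨h1⟩
  obtain ⟨I, hI, hmax⟩ := exists_maximal_linearIndepOn' (ZMod n) (id : A → A)
  set V := Submodule.span (ZMod n) I with hV
  let b0 := Module.Basis.span (v := fun i : I => (i : A)) hI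
  have hb0 : ∃ e : (I →₀ ZMod n) ≃ₗ[ZMod n] ↥V, ∀ i, ((e (Finsupp.single i 1) : ↥V) : A) = i := by
    have hr : Submodule.span (ZMod n) (Set.range (fun i : I => (i : A))) = V := by
      simp [hV]
    refine ⟨b0.repr.symm.trans (LinearEquiv.ofEq _ _ hr), fun i => ?_⟩
    have := Module.Basis.span_apply (v := fun i : I => (i : A)) hI i
    simpa [b0] using congrArg Subtype.val this
  obtain ⟨e, he⟩ := hb0
  have hB : Module.Baer (ZMod n) V := Module.Baer.of_equiv e (j_zmod_baer n hn I)
  obtain ⟨r, hr⟩ := hB.extension_property V.subtype V.injective_subtype LinearMap.id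
  have hr' : ∀ v : V, r v = v := fun v => DFunLike.congr_fun hr v
  -- section on V
  have hs1 : ∃ s : V →+ X, ∀ v, p (s v) = v := by
    choose x hx hx' using fun i : I => hp i
    choose f hf using fun i : I => j_zmod_hom n (x i) (hx' i n (hA _))
    refine ⟨(Finsupp.liftAddHom f).comp e.symm.toAddEquiv.toAddMonoidHom, ?_⟩
    have key : (p.comp (Finsupp.liftAddHom f)) =
        (V.subtype.toAddMonoidHom).comp e.toAddEquiv.toAddMonoidHom := by
      apply Finsupp.addHom_ext
      intro i c
      obtain ⟨z, rfl⟩ := ZMod.intCast_surjective c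
      have h2 : (Finsupp.single i (z : ZMod n)) = z • Finsupp.single i 1 := by
        simp
      have h3 : e (Finsupp.single i (z : ZMod n)) = z • e (Finsupp.single i 1) := by
        rw [h2, map_zsmul]
      have h4 : ((e (Finsupp.single i (z : ZMod n)) : V) : A) = z • (i : A) := by
        rw [h3]; push_cast; rw [he]
      simp [hf, hx]
      exact h4.symm
    intro v
    have := DFunLike.congr_fun key (e.symm v)
    simpa using this
  obtain ⟨s1, hs1⟩ := hs1
  -- complement
  let A' : AddSubgroup A := (LinearMap.ker r).toAddSubgroup
  have hA' : ∀ a : A', r a = 0 := fun a => a.2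
  have hbd : ∀ a : A', n • a = 0 := fun a => by ext; simpa using hA a
  have hdvd : AddMonoid.exponent A' ∣ n := AddMonoid.exponent_dvd_of_forall_nsmul_eq_zero hbd
  have hex : AddMonoid.ExponentExists A' := ⟨n, hn, hbd⟩
  have hlt : AddMonoid.exponent A' < n := by
    refine lt_of_le_of_ne (Nat.le_of_dvd hn hdvd) fun heq => ?_
    obtain ⟨g, hg⟩ := AddMonoid.exists_addOrderOf_eq_exponent hex
    rw [heq] at hg
    have hgz : ∀ c : ZMod n, c • (g : A) = 0 → c = 0 := by
      intro c hc
      obtain ⟨z, rfl⟩ := ZMod.intCast_surjective c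
      rw [Int.cast_smul_eq_zsmul] at hc
      rw [ZMod.intCast_zmod_eq_zero_iff_dvd, ← hg, addOrderOf_dvd_iff_zsmul_eq_zero]
      ext; simpa using hc
    have hli : LinearIndepOn (ZMod n) id {(g : A)} := by
      rw [linearIndepOn_iff]
      intro l hl hl0
      have hl' : l = Finsupp.single (g : A) (l g) := by
        rw [Finsupp.eq_single_iff]
        exact ⟨by exact_mod_cast (Finsupp.mem_supported _ _).1 hl, rfl⟩
      rw [hl', Finsupp.linearCombination_single] at hl0
      rw [hl', hgz _ hl0, Finsupp.single_zero]
    have hdj : Disjoint (Submodule.span (ZMod n) I) (Submodule.span (ZMod n) {(g : A)}) := by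
      rw [Submodule.disjoint_def]
      intro x hx hx2
      obtain ⟨c, rfl⟩ := Submodule.mem_span_singleton.1 hx2
      have := hr' ⟨_, hx⟩
      rw [map_smul, hA' g, smul_zero] at this
      simpa using (congrArg Subtype.val this).symm
    have hu := hmax _ Set.subset_union_left (hI.id_union hli hdj)
    have hgI : (g : A) ∈ I := by rw [hu]; simp
    have := hr' ⟨g, Submodule.subset_span hgI⟩
    rw [hA' g] at this
    have hg0 : g = 0 := by ext; simpa using (congrArg Subtype.val this).symm
    rw [hg0] at hg
    simp at hg
    omega
  obtain ⟨s2, hs2⟩ := ih _ hlt (Nat.pos_of_ne_zero (AddMonoid.exponent_ne_zero.2 hex)) A'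
    (fun a => AddMonoid.exponent_nsmul_eq_zero a) (A'.comap p)
    (p.addSubgroupComap A') (by
      intro a
      obtain ⟨x, hx, hx'⟩ := hp a
      refine ⟨⟨x, by simp [hx]⟩, Subtype.ext hx, fun m hm => ?_⟩
      ext
      exact hx' m (congrArg Subtype.val hm))
  let q : A →+ A' := ((LinearMap.id - V.subtype ∘ₗ r).toAddMonoidHom).codRestrict A' (by
    intro a
    change r (a - r a) = 0
    rw [map_sub, hr', sub_self])
  refine ⟨s1.comp r.toAddMonoidHom + (A'.comap p).subtype.comp (s2.comp q), fun a => ?_⟩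
  have h5 := congrArg Subtype.val (hs2 (q a))
  have h6 : p ((s2 (q a) : A'.comap p) : X) = a - r a := h5
  simp [hs1, h6]

theorem j_split_bounded (n : ℕ) : 0 < n → ∀ (A : Type) [AddCommGroup A], (∀ a : A, n • a = 0) →
    JSplit A := by
  induction n using Nat.strong_induction_on with
  | _ n ih =>
  intro hn A _ hA X _ p hp
  rcases Nat.lt_or_ge 1 n with h1 | h1
  swap
  · obtain rfl : n = 1 := by omega
    exact ⟨0, fun a => by simpa using (hA a).symm⟩
  exact j_split_step n h1 A (AddCommGroup.zmodModule hA) hA (fun m h h' A' _ hA' => ih m h h' A' hA') X p hp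

theorem j_split_fg (A : Type) [AddCommGroup A] [AddGroup.FG A] : JSplit A := by
  intro X _ p hp
  classical
  obtain ⟨r, ι, _, q, hq, k, ⟨e⟩⟩ := AddCommGroup.equiv_free_prod_directSum_zmod A
  choose x hx hx' using hp
  let f1 : (Fin r →₀ ℤ) →+ X :=
    Finsupp.liftAddHom fun i => zmultiplesHom X (x (e.symm (Finsupp.single i 1, 0)))
  have hz : ∀ i, (q i ^ k i) • x (e.symm (0, DirectSum.of (fun i => ZMod (q i ^ k i)) i 1)) = 0 := by
    intro i
    apply hx'
    rw [← map_nsmul, Prod.smul_mk, ← map_nsmul]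
    simp
  choose f hf using fun i => j_zmod_hom _ _ (hz i)
  let f2 : (⨁ i, ZMod (q i ^ k i)) →+ X := DirectSum.toAddMonoid f
  have key : p.comp (f1.coprod f2) = e.symm.toAddMonoidHom := by
    have k1 : p.comp f1 = e.symm.toAddMonoidHom.comp (AddMonoidHom.inl _ _) := by
      ext i
      simp [f1, hx]
    have k2 : p.comp f2 = e.symm.toAddMonoidHom.comp (AddMonoidHom.inr _ _) := by
      apply DirectSum.addHom_ext
      intro i c
      obtain ⟨z, rfl⟩ := ZMod.intCast_surjective c
      have h2 : DirectSum.of (fun i => ZMod (q i ^ k i)) i (z : ZMod (q i ^ k i)) =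
          z • DirectSum.of (fun i => ZMod (q i ^ k i)) i 1 := by
        rw [← map_zsmul]; simp
      have h3 : ((0 : Fin r →₀ ℤ), z • DirectSum.of (fun i => ZMod (q i ^ k i)) i 1) =
          z • (0, DirectSum.of (fun i => ZMod (q i ^ k i)) i 1) := by
        simp
      simp only [f2, AddMonoidHom.comp_apply, DirectSum.toAddMonoid_of, hf, map_zsmul, hx,
        AddMonoidHom.inr_apply]
      rw [h2, h3, map_zsmul]
      rfl
    rw [AddMonoidHom.comp_coprod, k1, k2, ← AddMonoidHom.comp_coprod, AddMonoidHom.coprod_inl_inr,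
      AddMonoidHom.comp_id]
  refine ⟨(f1.coprod f2).comp e.toAddMonoidHom, fun a => ?_⟩
  simpa using DFunLike.congr_fun key (e a)

/-- Condition (L): solvability of `n h = φ (n y)`. -/
def JSolv {F G H : Type} [AddCommGroup F] [AddCommGroup G] [AddCommGroup H]
    (π : F →+ G) (φ : π.ker →+ H) : Prop :=
  ∀ (y : F) (n : ℕ) (k : π.ker), (k : F) = n • y → ∃ h : H, n • h = φ k

theorem j_extend {F G H : Type} [AddCommGroup F] [AddCommGroup G] [AddCommGroup H]
    (π : F →+ G) (hπ : Function.Surjective π) (φ : π.ker →+ H) (hφ : JSolv π φ)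
    (B : AddSubgroup G) (hB : JSplit B) :
    ∃ φ' : B.comap π →+ H, ∀ (k : π.ker) (hk : (k : F) ∈ B.comap π), φ' ⟨k, hk⟩ = φ k := by
  have hker : π.ker ≤ B.comap π := fun x hx => by
    have : π x = 0 := hx
    simp [this]
  let j : π.ker →+ (B.comap π) × H := (AddSubgroup.inclusion hker).prod (-φ)
  let p0 : (B.comap π) × H →+ B := (π.addSubgroupComap B).comp (AddMonoidHom.fst _ _)
  let X := ((B.comap π) × H) ⧸ j.range
  let mk : (B.comap π) × H →+ X := QuotientAddGroup.mk' j.range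
  let p : X →+ B := QuotientAddGroup.lift j.range p0 (by
    rintro _ ⟨k, rfl⟩
    ext
    exact k.2)
  have hp0 : ∀ z, p (mk z) = p0 z := fun z => rfl
  have hmk0 : ∀ z, mk z = 0 ↔ ∃ k, j k = z := fun z =>
    QuotientAddGroup.eq_zero_iff (N := j.range) z
  have hlift : JLifts p := by
    rintro ⟨a, ha⟩
    obtain ⟨y, rfl⟩ := hπ a
    let n := addOrderOf (⟨π y, ha⟩ : B)
    have hn : n • (⟨π y, ha⟩ : B) = 0 := addOrderOf_nsmul_eq_zero _
    have hn' : π (n • y) = 0 := by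
      rw [map_nsmul]; exact congrArg Subtype.val hn
    obtain ⟨h, hh⟩ := hφ y n ⟨n • y, hn'⟩ rfl
    refine ⟨mk (⟨y, ha⟩, -h), rfl, fun m hm => ?_⟩
    obtain ⟨c, rfl⟩ : n ∣ m := addOrderOf_dvd_iff_nsmul_eq_zero.2 hm
    rw [mul_comm, mul_smul]
    have : n • mk (⟨y, ha⟩, -h) = 0 := by
      rw [← map_nsmul, hmk0]
      refine ⟨⟨n • y, hn'⟩, ?_⟩
      refine Prod.ext (Subtype.ext rfl) ?_
      change -φ _ = n • -h
      rw [smul_neg, hh]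
    rw [this, smul_zero]
  obtain ⟨s, hs⟩ := hB X p hlift
  let ι : H →+ X := mk.comp (AddMonoidHom.inr _ _)
  have hι : Function.Injective ι := by
    rw [injective_iff_map_eq_zero]
    intro h hh
    obtain ⟨k, hk⟩ := (hmk0 _).1 hh
    have h1 : (k : F) = 0 := congrArg (fun z => ((z.1 : B.comap π) : F)) hk
    have h2 : -φ k = h := congrArg Prod.snd hk
    have : k = 0 := Subtype.ext h1
    rw [← h2, this]; simp
  let d : B.comap π →+ X := mk.comp (AddMonoidHom.inl _ _) - s.comp (π.addSubgroupComap B)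
  have hd : ∀ z, ∃ h, ι h = d z := by
    intro z
    have h0 : p (d z) = 0 := by
      simp only [d, AddMonoidHom.sub_apply, map_sub, AddMonoidHom.comp_apply, hs, hp0]
      simp [p0]
    obtain ⟨⟨w, h⟩, hw⟩ := QuotientAddGroup.mk'_surjective j.range (d z)
    change mk (w, h) = d z at hw
    rw [← hw, hp0] at h0
    have hwk : (w : F) ∈ π.ker := congrArg Subtype.val h0
    refine ⟨h + φ ⟨w, hwk⟩, ?_⟩
    rw [← hw, ← sub_eq_zero]
    change mk _ - mk _ = 0
    rw [← map_sub, hmk0]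
    refine ⟨-⟨w, hwk⟩, Prod.ext (Subtype.ext ?_) ?_⟩
    · simp [j]
    · simp [j]
  choose f hf using hd
  refine ⟨AddMonoidHom.mk' f fun a b => hι ?_, fun k hk => hι ?_⟩
  · rw [hf, map_add, map_add, hf, hf]
  · change ι (f _) = _
    rw [hf]
    have h1 : π.addSubgroupComap B ⟨k, hk⟩ = 0 := Subtype.ext k.2
    simp only [d, AddMonoidHom.sub_apply, AddMonoidHom.comp_apply, h1, map_zero, sub_zero, ι]
    rw [← sub_eq_zero, ← map_sub, hmk0]
    refine ⟨k, Prod.ext (Subtype.ext ?_) ?_⟩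
    · simp [j]
    · simp [j]

theorem j_ext_ker {A B D : Type} [AddCommGroup A] [AddCommGroup B] [AddCommGroup D]
    (hD : Module.Baer ℤ D) (f : A →+ B) (g : A →+ D) (h : ∀ a, f a = 0 → g a = 0) :
    ∃ k : B →+ D, ∀ a, k (f a) = g a := by
  obtain ⟨k, hk⟩ := hD.extension_property_addMonoidHom (QuotientAddGroup.kerLift f)
    (QuotientAddGroup.kerLift_injective f) (QuotientAddGroup.lift f.ker g h)
  exact ⟨k, fun a => DFunLike.congr_fun hk (QuotientAddGroup.mk a)⟩

theorem j_proj {F A B : Type} [AddCommGroup F] [AddCommGroup A] [AddCommGroup B]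
    [Module.Projective ℤ F] (f : A →+ B) (hf : Function.Surjective f) (g : F →+ B) :
    ∃ k : F →+ A, ∀ x, f (k x) = g x := by
  obtain ⟨k, hk⟩ := Module.projective_lifting_property f.toIntLinearMap g.toIntLinearMap hf
  exact ⟨k.toAddMonoidHom, fun x => DFunLike.congr_fun hk x⟩

theorem j_tf {F : Type} [AddCommGroup F] [Module.Projective ℤ F] (n : ℕ) (hn : 0 < n) (x : F)
    (hx : n • x = 0) : x = 0 := by
  obtain ⟨s, hs⟩ := Module.projective_def.1 (inferInstance : Module.Projective ℤ F)
  have h1 : n • s x = 0 := by rw [← map_nsmul, hx, map_zero]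
  have h2 : s x = 0 := by
    ext i
    have := DFunLike.congr_fun h1 i
    simp at this
    simp
    omega
  rw [← hs x, h2, map_zero]

theorem j_embed (H : Type) [AddCommGroup H] : ∃ (D : Type) (_ : AddCommGroup D)
    (_ : DivisibleBy D ℤ) (i : H →+ D), Function.Injective i := by
  refine ⟨CharacterModule H → AddCircle (1 : ℚ), inferInstance, inferInstance,
    AddMonoidHom.mk' (fun h c => c h) (fun a b => by ext c; simp), ?_⟩
  rw [injective_iff_map_eq_zero]
  intro a ha
  exact CharacterModule.eq_zero_of_character_apply fun c => congrFun ha c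

theorem j_div {F G H : Type} [AddCommGroup F] [AddCommGroup G] [AddCommGroup H]
    [Module.Projective ℤ F] (π : F →+ G) (φ : π.ker →+ H) (n : ℕ) (hn : 0 < n)
    (T : AddSubgroup F) (hT : ∀ x, x ∈ T ↔ n • x ∈ π.ker) (hTk : π.ker ≤ T)
    (φ' : T →+ H) (hφ' : ∀ (k : π.ker), φ' ⟨k, hTk k.2⟩ = φ k) :
    ∃ (ψ : π.ker →+ H) (χ : F →+ H), ∀ k : π.ker, φ k = n • ψ k + χ k := by
  obtain ⟨D, _, _, i, hi⟩ := j_embed H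
  -- multiplication by n, T → K
  let f : T →+ π.ker := AddMonoidHom.mk' (fun x => ⟨n • (x : F), (hT x).1 x.2⟩) (fun a b => by
    ext; simp)
  obtain ⟨θ, hθ⟩ := j_ext_ker (Module.Baer.of_divisible D) f (i.comp φ') (by
    intro a ha
    have h1 : n • (a : F) = 0 := congrArg Subtype.val ha
    have : a = 0 := Subtype.ext (j_tf n hn _ h1)
    rw [this, map_zero])
  let D' := D ⧸ i.range
  let _ : DivisibleBy D' ℤ := Function.Surjective.divisibleBy (QuotientAddGroup.mk' i.range)
    (QuotientAddGroup.mk'_surjective i.range) (fun a n => map_zsmul _ n a)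
  let q : D →+ D' := QuotientAddGroup.mk' i.range
  have hq0 : ∀ z, q z = 0 ↔ ∃ h, i h = z := fun z => QuotientAddGroup.eq_zero_iff (N := i.range) z
  let N : AddSubgroup F := (n • AddMonoidHom.id F).range
  let m : F →+ F ⧸ N := QuotientAddGroup.mk' N
  have hm0 : ∀ z, m z = 0 ↔ ∃ y, n • y = z := fun z => QuotientAddGroup.eq_zero_iff (N := N) z
  obtain ⟨β, hβ⟩ := j_ext_ker (D := D') (Module.Baer.of_divisible D') (m.comp π.ker.subtype)
    (q.comp θ) (by
    intro a ha
    obtain ⟨y, hy⟩ := (hm0 _).1 ha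
    have hy' : n • y = (a : F) := hy
    have hyT : y ∈ T := (hT y).2 (by rw [hy']; exact a.2)
    have : f ⟨y, hyT⟩ = a := Subtype.ext hy'
    rw [AddMonoidHom.comp_apply, ← this, hθ, hq0]
    exact ⟨_, rfl⟩)
  obtain ⟨α, hα⟩ := j_proj q (QuotientAddGroup.mk'_surjective _) (β.comp m)
  have h1 : ∀ k : π.ker, ∃ h, i h = θ k - α k := by
    intro k
    rw [← hq0, map_sub, hα, sub_eq_zero]
    exact (hβ k).symm
  have h2 : ∀ x : F, ∃ h, i h = α (n • x) := by
    intro x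
    rw [← hq0, hα, AddMonoidHom.comp_apply, (hm0 (n • x)).2 ⟨x, rfl⟩, map_zero]
  choose ψ hψ using h1
  choose χ hχ using h2
  refine ⟨AddMonoidHom.mk' ψ fun a b => hi ?_, AddMonoidHom.mk' χ fun a b => hi ?_, fun k => hi ?_⟩
  · simp only [map_add, hψ, AddSubgroup.coe_add]; abel
  · simp only [map_add, hχ, smul_add]
  · have h3 := hθ ⟨k, hTk k.2⟩
    have h4 : f ⟨k, hTk k.2⟩ = n • k := rfl
    rw [h4, AddMonoidHom.comp_apply, hφ', map_nsmul] at h3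
    rw [map_add, map_nsmul]
    change i (φ k) = n • i (ψ k) + i (χ k)
    rw [hψ, hχ, ← h3, map_nsmul, smul_sub]
    abel

theorem j_proj_inst {A : Type} [AddCommGroup A] (inst : Module ℤ A)
    (h : @Module.Projective ℤ _ A _ inst) :
    @Module.Projective ℤ _ A _ (AddCommGroup.toIntModule A) := by
  obtain rfl : inst = AddCommGroup.toIntModule A := Subsingleton.elim _ _
  exact h

/-- Additive maps are `ℤ`-linear for any `ℤ`-module structures. -/
def jToInt {A B : Type} [AddCommGroup A] [AddCommGroup B] [Module ℤ A] [Module ℤ B] (f : A →+ B) :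
    A →ₗ[ℤ] B where
  toFun := f
  map_add' := f.map_add
  map_smul' := fun z x => by simpa using map_intCast_smul f ℤ ℤ z x

theorem j_ext_pres (G H : Type) [AddCommGroup G] [AddCommGroup H] :
    ∃ (F : Type) (_ : AddCommGroup F) (π : F →+ G) (c : (π.ker →+ H) →+ Ext1 G H),
      Function.Surjective π ∧ Module.Projective ℤ F ∧ Function.Surjective c ∧
      ∀ φ, c φ = 0 ↔ ∃ χ : F →+ H, ∀ k : π.ker, χ k = φ k := by
  let P := ProjectiveResolution.of (ModuleCat.of ℤ G)
  let C := P.complex.linearYonedaObj ℤ (ModuleCat.of ℤ H)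
  let S := C.sc' 0 1 2
  let e1 : Ext1 G H ≃+ (LinearMap.ker S.g.hom ⧸ LinearMap.range S.moduleCatToCycles) :=
    ((P.isoExt (R := ℤ) 1 (ModuleCat.of ℤ H)) ≪≫
      (C.homologyIsoSc' 0 1 2 (by simp) (by simp)) ≪≫
      S.moduleCatHomologyIso).toLinearEquiv.toAddEquiv
  let π : P.complex.X 0 →+ G := (P.π.f 0).hom.toAddMonoidHom
  have hex0 := (ShortComplex.moduleCat_exact_iff _).1 P.exact₀
  have hex1 := (ShortComplex.moduleCat_exact_iff _).1 (P.exact_succ 0)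
  have hπ : Function.Surjective π := (ModuleCat.epi_iff_surjective (P.π.f 0)).1 inferInstance
  have hSg : ∀ f : P.complex.X 1 ⟶ ModuleCat.of ℤ H, S.g.hom f = P.complex.d 2 1 ≫ f := fun f => rfl
  have hSf : ∀ f : P.complex.X 0 ⟶ ModuleCat.of ℤ H, S.f.hom f = P.complex.d 1 0 ≫ f := fun f => rfl
  let δ : P.complex.X 1 →+ π.ker := (P.complex.d 1 0).hom.toAddMonoidHom.codRestrict π.ker (by
    intro x
    have := congrArg (fun f => f.hom x) P.complex_d_comp_π_f_zero
    exact this)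
  have hδ : Function.Surjective δ := by
    rintro ⟨k, hk⟩
    obtain ⟨x, hx⟩ := hex0 k hk
    exact ⟨x, Subtype.ext hx⟩
  have hδ2 : ∀ x, δ ((P.complex.d 2 1).hom x) = 0 := by
    intro x
    apply Subtype.ext
    have := congrArg (fun f => f.hom x) (P.complex.d_comp_d 2 1 0)
    exact this
  have hδ1 : ∀ x, δ x = 0 → ∃ y, (P.complex.d 2 1).hom y = x := by
    intro x hx
    exact hex1 x (congrArg Subtype.val hx)
  let cyc0 : (π.ker →+ H) → (P.complex.X 1 ⟶ ModuleCat.of ℤ H) := fun φ =>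
    ModuleCat.ofHom (jToInt (φ.comp δ))
  have hcyc0 : ∀ φ, cyc0 φ ∈ LinearMap.ker S.g.hom := by
    intro φ
    have : P.complex.d 2 1 ≫ cyc0 φ = 0 := by
      ext x
      change φ (δ ((P.complex.d 2 1).hom x)) = 0
      rw [hδ2, map_zero]
    exact this
  let cyc : (π.ker →+ H) →+ LinearMap.ker S.g.hom :=
    AddMonoidHom.mk' (fun φ => ⟨cyc0 φ, hcyc0 φ⟩) (fun a b => rfl)
  have hcs : Function.Surjective cyc := by
    rintro ⟨f, hf⟩
    have hf' : P.complex.d 2 1 ≫ f = 0 := hf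
    let f0 : P.complex.X 1 ⟶ ModuleCat.of ℤ H := f
    have hf2 : ∀ x, δ x = 0 → f0.hom x = 0 := by
      intro x hx
      obtain ⟨y, rfl⟩ := hδ1 x hx
      exact congrArg (fun f => f.hom y) hf'
    let φ : π.ker →+ H := δ.liftOfSurjective hδ ⟨f0.hom.toAddMonoidHom, hf2⟩
    refine ⟨φ, Subtype.ext ?_⟩
    have : cyc0 φ = f0 := by
      ext x
      exact AddMonoidHom.liftOfRightInverse_comp_apply δ _
        (Function.rightInverse_surjInv hδ) ⟨f0.hom.toAddMonoidHom, hf2⟩ x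
    exact this
  let mkq : LinearMap.ker S.g.hom →+ (LinearMap.ker S.g.hom ⧸ LinearMap.range S.moduleCatToCycles) :=
    (LinearMap.range S.moduleCatToCycles).mkQ.toAddMonoidHom
  refine ⟨P.complex.X 0, inferInstance, π, e1.symm.toAddMonoidHom.comp (mkq.comp cyc), hπ, ?_, ?_, ?_⟩
  · have := P.projective 0
    have h := (IsProjective.iff_projective (R := ℤ) (P.complex.X 0)).2 this
    exact j_proj_inst (P.complex.X 0).isModule h
  · exact e1.symm.surjective.comp ((Submodule.mkQ_surjective _).comp hcs)
  · intro φ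
    have h1 : (e1.symm.toAddMonoidHom.comp (mkq.comp cyc)) φ = 0 ↔ mkq (cyc φ) = 0 :=
      EmbeddingLike.map_eq_zero_iff (f := e1.symm)
    have h2 : mkq (cyc φ) = 0 ↔ cyc φ ∈ LinearMap.range S.moduleCatToCycles :=
      Submodule.Quotient.mk_eq_zero _
    rw [h1, h2]
    constructor
    · rintro ⟨χ, hχ⟩
      let χ0 : P.complex.X 0 ⟶ ModuleCat.of ℤ H := χ
      refine ⟨χ0.hom.toAddMonoidHom, fun k => ?_⟩
      obtain ⟨x, rfl⟩ := hδ k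
      have h3 : P.complex.d 1 0 ≫ χ0 = cyc0 φ := congrArg Subtype.val hχ
      exact congrArg (fun f => f.hom x) h3
    · rintro ⟨χ, hχ⟩
      let χ0 : P.complex.X 0 ⟶ ModuleCat.of ℤ H := ModuleCat.ofHom (jToInt χ)
      refine ⟨χ0, Subtype.ext ?_⟩
      have h3 : P.complex.d 1 0 ≫ χ0 = cyc0 φ := by
        ext x
        exact hχ (δ x)
      exact h3

theorem j_pext_iff {F G H : Type} [AddCommGroup F] [AddCommGroup G] [AddCommGroup H]
    [Module.Projective ℤ F] (π : F →+ G) (hπ : Function.Surjective π)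
    (c : (π.ker →+ H) →+ Ext1 G H) (hc : Function.Surjective c)
    (hc0 : ∀ φ, c φ = 0 ↔ ∃ χ : F →+ H, ∀ k : π.ker, χ k = φ k) (φ : π.ker →+ H) :
    c φ ∈ Pext1 G H ↔ JSolv π φ := by
  have hP : c φ ∈ Pext1 G H ↔ ∀ n : ℕ, 1 ≤ n → ∃ e : Ext1 G H, n • e = c φ := by
    simp only [Pext1, AddSubgroup.mem_iInf]
    rfl
  rw [hP]
  constructor
  · intro h y n k hk
    rcases Nat.eq_zero_or_pos n with rfl | hn
    · have : k = 0 := Subtype.ext (by simpa using hk)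
      exact ⟨0, by simp [this]⟩
    obtain ⟨e, he⟩ := h n hn
    obtain ⟨ψ, rfl⟩ := hc e
    rw [← map_nsmul, eq_comm, ← sub_eq_zero, ← map_sub, hc0] at he
    obtain ⟨χ, hχ⟩ := he
    refine ⟨ψ k + χ y, ?_⟩
    have h1 := hχ k
    rw [hk, map_nsmul] at h1
    simp only [AddMonoidHom.sub_apply, AddMonoidHom.nsmul_apply] at h1
    rw [smul_add, h1]; abel
  · intro h n hn
    let B : AddSubgroup G := (n • AddMonoidHom.id G).ker
    have hB : ∀ x, x ∈ B ↔ n • x = 0 := fun x => Iff.rfl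
    obtain ⟨φ', hφ'⟩ := j_extend π hπ φ h B (j_split_bounded n hn B (fun a => Subtype.ext a.2))
    obtain ⟨ψ, χ, hψ⟩ := j_div π φ n hn (B.comap π) (fun x => by
        rw [AddSubgroup.mem_comap, hB, AddMonoidHom.mem_ker, map_nsmul]) (fun x hx => by
        rw [AddSubgroup.mem_comap, hB, (AddMonoidHom.mem_ker).1 hx, smul_zero]) φ'
        (fun k => hφ' k _)
    refine ⟨c ψ, ?_⟩
    rw [← map_nsmul, eq_comm, ← sub_eq_zero, ← map_sub, hc0]
    refine ⟨χ, fun k => ?_⟩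
    simp only [AddMonoidHom.sub_apply, AddMonoidHom.nsmul_apply, hψ k]
    abel

/-- Vanishing of `lim¹ Hom(F_i, H)` for projective `F = ⋃ F_i`. -/
theorem j_lim1_proj {F H : Type} [AddCommGroup F] [AddCommGroup H] [Module.Projective ℤ F]
    (Fs : ℕ → AddSubgroup F) (hmono : Monotone Fs) (hunion : ∀ x, ∃ i, x ∈ Fs i)
    (γ : ∀ i, Fs i →+ H) :
    ∃ φ : ∀ i, Fs i →+ H, ∀ i (x : Fs i),
      φ i x - φ (i + 1) (AddSubgroup.inclusion (hmono (Nat.le_succ i)) x) = γ i x := by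
  classical
  obtain ⟨s, hs⟩ := Module.projective_def.1 (inferInstance : Module.Projective ℤ F)
  -- approximate projections
  let τ : ∀ k, (F →₀ ℤ) →+ Fs k := fun k => Finsupp.liftAddHom fun b =>
    if h : b ∈ Fs k then zmultiplesHom (Fs k) ⟨b, h⟩ else 0
  have hτ : ∀ l : F →₀ ℤ, ∃ N, ∀ k, N ≤ k → ((τ k l : Fs k) : F) = Finsupp.linearCombination ℤ id l := by
    intro l
    induction l using Finsupp.induction_linear with
    | zero => exact ⟨0, fun k _ => by simp⟩
    | add a b ha hb =>
      obtain ⟨N, hN⟩ := ha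
      obtain ⟨M, hM⟩ := hb
      refine ⟨max N M, fun k hk => ?_⟩
      rw [map_add, map_add, AddSubgroup.coe_add, hN k (le_trans (le_max_left _ _) hk),
        hM k (le_trans (le_max_right _ _) hk)]
    | single b z =>
      obtain ⟨N, hN⟩ := hunion b
      refine ⟨N, fun k hk => ?_⟩
      have : b ∈ Fs k := hmono hk hN
      simp [τ, this]
  let σ : ∀ k, F →+ Fs k := fun k => (τ k).comp s.toAddMonoidHom
  have hσ : ∀ x : F, ∃ N, ∀ k, N ≤ k → ((σ k x : Fs k) : F) = x := by
    intro x
    obtain ⟨N, hN⟩ := hτ (s x)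
    exact ⟨N, fun k hk => (hN k hk).trans (hs x)⟩
  -- the summands
  let t : ∀ i k, Fs i →+ H := fun i k =>
    (if h : i ≤ k then (γ k).comp (AddSubgroup.inclusion (hmono h)) else 0) -
      (γ k).comp ((σ k).comp (Fs i).subtype)
  have htf : ∀ i (x : Fs i), (Function.support fun k => t i k x).Finite := by
    intro i x
    obtain ⟨N, hN⟩ := hσ x
    refine (Set.finite_lt_nat (max N i)).subset fun k hk => ?_
    by_contra hlt
    simp only [Set.mem_ofPred_eq, not_lt] at hlt
    apply hk
    have h1 : i ≤ k := le_trans (le_max_right _ _) hlt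
    have h2 : σ k x = AddSubgroup.inclusion (hmono h1) x :=
      Subtype.ext (hN k (le_trans (le_max_left _ _) hlt))
    simp [t, h1, h2]
  refine ⟨fun i => AddMonoidHom.mk' (fun x => ∑ᶠ k, t i k x) (fun a b => by
    rw [← finsum_add_distrib (htf i a) (htf i b)]
    simp only [map_add]), fun i x => ?_⟩
  change (∑ᶠ k, t i k x) - (∑ᶠ k, t (i + 1) k _) = _
  rw [← finsum_sub_distrib (htf i x) (htf (i + 1) _), finsum_eq_single _ i]
  · simp [t]
    rfl
  · intro k hk
    by_cases h : i ≤ k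
    · have h' : i + 1 ≤ k := by omega
      simp [t, h, h']
      exact sub_self _
    · have h' : ¬ i + 1 ≤ k := by omega
      simp [t, h, h']

theorem j_factor {A B H : Type} [AddCommGroup A] [AddCommGroup B] [AddCommGroup H]
    (q : A →+ B) (hq : Function.Surjective q) (f : A →+ H) (h : ∀ a, q a = 0 → f a = 0) :
    ∃ g : B →+ H, ∀ a, g (q a) = f a :=
  ⟨q.liftOfSurjective hq ⟨f, h⟩, fun a => AddMonoidHom.liftOfRightInverse_comp_apply q _
        (Function.rightInverse_surjInv hq) ⟨f, h⟩ a⟩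

theorem j_glue {F H : Type} [AddCommGroup F] [AddCommGroup H]
    (Fs : ℕ → AddSubgroup F) (hmono : Monotone Fs) (hunion : ∀ x, ∃ i, x ∈ Fs i)
    (f : ∀ i, Fs i →+ H)
    (hf : ∀ i (x : Fs i), f (i + 1) (AddSubgroup.inclusion (hmono (Nat.le_succ i)) x) = f i x) :
    ∃ χ : F →+ H, ∀ i (x : Fs i), χ x = f i x := by
  have h1 : ∀ i j (hij : i ≤ j) (x : F) (hx : x ∈ Fs i), f j ⟨x, hmono hij hx⟩ = f i ⟨x, hx⟩ := by
    intro i j hij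
    induction j, hij using Nat.le_induction with
    | base => intro x hx; rfl
    | succ j hij ih =>
      intro x hx
      rw [← ih x hx]
      exact hf j ⟨x, hmono hij hx⟩
  have h2 : ∀ i j (x : F) (hx : x ∈ Fs i) (hx' : x ∈ Fs j), f j ⟨x, hx'⟩ = f i ⟨x, hx⟩ := by
    intro i j x hx hx'
    rcases le_total i j with h | h
    · exact h1 i j h x hx
    · exact (h1 j i h x hx').symm
  choose N hN using hunion
  have h3 : ∀ i (x : F) (hx : x ∈ Fs i), f (N x) ⟨x, hN x⟩ = f i ⟨x, hx⟩ := fun i x hx =>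
    h2 _ _ _ _ _
  refine ⟨AddMonoidHom.mk' (fun x => f (N x) ⟨x, hN x⟩) fun a b => ?_, fun i x => h3 i x x.2⟩
  let m := max (N a) (N b)
  have ha : a ∈ Fs m := hmono (le_max_left _ _) (hN a)
  have hb : b ∈ Fs m := hmono (le_max_right _ _) (hN b)
  rw [h3 m a ha, h3 m b hb, h3 m (a + b) (add_mem ha hb), ← map_add]
  rfl

/-- Jensen's theorem: for a countable abelian group `G` written as the union of
an increasing sequence of finitely generated subgroups `G_i`, and any abelian group `H`,
`Pext¹(G,H) ≅ lim¹ Hom(G_i,H)`, the latter being the cokernel of the Eilenberg map. -/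
theorem jensen_pext_iso_lim1 (G H : Type) [AddCommGroup G] [AddCommGroup H] [Countable G]
    (Gs : ℕ → AddSubgroup G) (hmono : Monotone Gs) (hfg : ∀ i, (Gs i).FG)
    (hunion : ∀ x : G, ∃ i, x ∈ Gs i) :
    Nonempty ((Pext1 G H) ≃+
      ((∀ i, ↥(Gs i) →+ H) ⧸ (eilenberg G H Gs hmono).range)) := by
  obtain ⟨F, _, π, c, hπ, _, hc, hc0⟩ := j_ext_pres G H
  have hpi := j_pext_iff π hπ c hc hc0
  let Fs : ℕ → AddSubgroup F := fun i => (Gs i).comap π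
  have hFmono : Monotone Fs := fun i j hij => AddSubgroup.comap_mono (hmono hij)
  have hFunion : ∀ x, ∃ i, x ∈ Fs i := fun x => hunion (π x)
  have hKF : ∀ i, π.ker ≤ Fs i := fun i x hx => by
    have : π x = 0 := hx
    simp [Fs, this]
  let q : ∀ i, Fs i →+ Gs i := fun i => π.addSubgroupComap (Gs i)
  have hq : ∀ i, Function.Surjective (q i) := by
    rintro i ⟨a, ha⟩
    obtain ⟨y, rfl⟩ := hπ a
    exact ⟨⟨y, ha⟩, rfl⟩
  have hq0 : ∀ i (x : Fs i), q i x = 0 ↔ (x : F) ∈ π.ker := fun i x =>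
    ⟨fun h => congrArg Subtype.val h, fun h => Subtype.ext h⟩
  have hqk : ∀ i (k : π.ker), q i (AddSubgroup.inclusion (hKF i) k) = 0 := fun i k =>
    (hq0 i _).2 k.2
  let inc : ∀ i, Fs i →+ Fs (i + 1) := fun i => AddSubgroup.inclusion (hFmono (Nat.le_succ i))
  let incG : ∀ i, Gs i →+ Gs (i + 1) := fun i => AddSubgroup.inclusion (hmono (Nat.le_succ i))
  have hqi : ∀ i x, q (i + 1) (inc i x) = incG i (q i x) := fun i x => rfl
  have hE : ∀ f i x, eilenberg G H Gs hmono f i x = f i x - f (i + 1) (incG i x) :=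
    fun f i x => rfl
  let T : AddSubgroup ((∀ i, Fs i →+ H) × (∀ i, Gs i →+ H)) :=
    { carrier := {w | ∀ i x, w.1 i x - w.1 (i + 1) (inc i x) = w.2 i (q i x)}
      zero_mem' := fun i x => by simp
      add_mem' := fun {a b} ha hb i x => by
        have h1 := ha i x
        have h2 := hb i x
        simp only [Prod.fst_add, Prod.snd_add, Pi.add_apply, AddMonoidHom.add_apply]
        rw [← h1, ← h2]; abel
      neg_mem' := fun {a} ha i x => by
        have h1 := ha i x
        simp only [Prod.fst_neg, Prod.snd_neg, Pi.neg_apply, AddMonoidHom.neg_apply]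
        rw [← h1]; abel }
  have hT : ∀ w : T, ∀ i x, w.1.1 i x - w.1.1 (i + 1) (inc i x) = w.1.2 i (q i x) := fun w => w.2
  -- restriction to the kernel
  let res : T →+ (π.ker →+ H) :=
    AddMonoidHom.mk' (fun w => (w.1.1 0).comp (AddSubgroup.inclusion (hKF 0))) (fun a b => rfl)
  have hres : ∀ (w : T) i (k : π.ker), w.1.1 i (AddSubgroup.inclusion (hKF i) k) = res w k := by
    intro w i k
    induction i with
    | zero => rfl
    | succ i ih =>
      have h := hT w i (AddSubgroup.inclusion (hKF i) k)
      rw [hqk, map_zero, sub_eq_zero] at h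
      rw [← ih, h]
      rfl
  have hresS : ∀ w : T, JSolv π (res w) := by
    intro w y n k hk
    obtain ⟨i, hi⟩ := hFunion y
    refine ⟨w.1.1 i ⟨y, hi⟩, ?_⟩
    rw [← map_nsmul, ← hres w i k]
    congr 1
    exact Subtype.ext hk.symm
  let u : T →+ Pext1 G H := (c.comp res).codRestrict (Pext1 G H) (fun w => (hpi _).2 (hresS w))
  let v : T →+ (∀ i, ↥(Gs i) →+ H) ⧸ (eilenberg G H Gs hmono).range :=
    (QuotientAddGroup.mk' _).comp ((AddMonoidHom.snd _ _).comp T.subtype)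
  have hu : Function.Surjective u := by
    rintro ⟨e, he⟩
    obtain ⟨φ, rfl⟩ := hc e
    have hφ := (hpi φ).1 he
    have hext : ∀ i, ∃ φ' : Fs i →+ H, ∀ (k : π.ker) (hk : (k : F) ∈ Fs i), φ' ⟨k, hk⟩ = φ k := by
      intro i
      have : AddGroup.FG (Gs i) := (AddGroup.fg_iff_addSubgroup_fg _).2 (hfg i)
      exact j_extend π hπ φ hφ (Gs i) (j_split_fg _)
    choose φ' hφ' using hext
    have hg : ∀ i, ∃ g : Gs i →+ H, ∀ x, g (q i x) = (φ' i - (φ' (i + 1)).comp (inc i)) x := by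
      intro i
      apply j_factor (q i) (hq i)
      intro x hx
      have hk := (hq0 i x).1 hx
      have h1 := hφ' i ⟨x, hk⟩ x.2
      have h2 := hφ' (i + 1) ⟨x, hk⟩ (inc i x).2
      exact sub_eq_zero.2 (h1.trans h2.symm)
    choose g hg using hg
    refine ⟨⟨(φ', g), fun i x => (hg i x).symm⟩, Subtype.ext ?_⟩
    change c _ = c φ
    congr 1
    ext k
    exact hφ' 0 k _
  have hv : Function.Surjective v := by
    intro z
    obtain ⟨g, rfl⟩ := QuotientAddGroup.mk'_surjective _ z
    obtain ⟨φ, hφ⟩ := j_lim1_proj Fs hFmono hFunion (fun i => (g i).comp (q i))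
    exact ⟨⟨(φ, g), fun i x => hφ i x⟩, rfl⟩
  have hker : u.ker = v.ker := by
    ext w
    have h1 : w ∈ u.ker ↔ c (res w) = 0 := by
      rw [AddMonoidHom.mem_ker]
      exact ⟨fun h => congrArg Subtype.val h, fun h => Subtype.ext h⟩
    have h2 : w ∈ v.ker ↔ ∃ f, eilenberg G H Gs hmono f = w.1.2 := by
      rw [AddMonoidHom.mem_ker]
      exact QuotientAddGroup.eq_zero_iff (N := (eilenberg G H Gs hmono).range) w.1.2
    rw [h1, h2, hc0]
    constructor
    · rintro ⟨χ, hχ⟩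
      have hf : ∀ i, ∃ f : Gs i →+ H, ∀ x, f (q i x) = (w.1.1 i - χ.comp (Fs i).subtype) x := by
        intro i
        apply j_factor (q i) (hq i)
        intro x hx
        have hk := (hq0 i x).1 hx
        have h3 := hres w i ⟨x, hk⟩
        exact sub_eq_zero.2 (h3.trans (hχ ⟨x, hk⟩).symm)
      choose f hf using hf
      refine ⟨f, ?_⟩
      funext i
      ext y
      obtain ⟨x, rfl⟩ := hq i y
      rw [hE, ← hqi, hf, hf, ← hT w i x]
      change w.1.1 i x - χ x - (w.1.1 (i + 1) (inc i x) - χ x) = _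
      abel
    · rintro ⟨f, hf⟩
      obtain ⟨χ, hχ⟩ := j_glue Fs hFmono hFunion (fun i => w.1.1 i - (f i).comp (q i)) (by
        intro i x
        have h3 := hT w i x
        rw [← hf, hE] at h3
        change w.1.1 (i + 1) (inc i x) - f (i + 1) (incG i (q i x)) = w.1.1 i x - f i (q i x)
        rw [sub_eq_sub_iff_add_eq_add] at h3 ⊢
        rw [add_comm, add_comm (w.1.1 i x), ← sub_eq_zero]
        rw [← sub_eq_zero] at h3
        rw [← neg_eq_zero, ← h3]
        abel)
      refine ⟨χ, fun k => ?_⟩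
      have h4 := hχ 0 (AddSubgroup.inclusion (hKF 0) k)
      refine h4.trans ?_
      simp only [AddMonoidHom.sub_apply, AddMonoidHom.comp_apply, hqk, map_zero, sub_zero]
      rfl
  exact ⟨(QuotientAddGroup.quotientKerEquivOfSurjective u hu).symm.trans
    ((QuotientAddGroup.quotientAddEquivOfEq hker).trans
      (QuotientAddGroup.quotientKerEquivOfSurjective v hv))⟩
end

section
/- A short exact sequence of abelian groups 0 → H → E → G → 0 is pure if and only if its extension class in Ext¹(G,H) lies in n·Ext¹(G,H) for every integer n ≥ 1, i.e. lies in Pext¹(G,H). -/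
open CategoryTheory

noncomputable instance : HasDerivedCategory.{1} (ModuleCat.{0} ℤ) :=
  HasDerivedCategory.standard _

instance : HasExt.{1} (ModuleCat.{0} ℤ) :=
  hasExt_of_hasDerivedCategory _

/-- A pure subgroup `H` with bounded quotient is a direct summand. -/
theorem exists_isCompl_of_pure {E : Type*} [AddCommGroup E] (H : AddSubgroup E) (n : ℕ)
    (hn : 0 < n) (hb : ∀ x : E, n • x ∈ H)
    (hp : ∀ (m : ℕ) (x : E), m • x ∈ H → ∃ h ∈ H, m • x = m • h) :
    ∃ C : AddSubgroup E, IsCompl H C := by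
  let P : Set (AddSubgroup E) := {C | (∀ x ∈ H, x ∈ C → x = 0) ∧
    ∀ (m : ℕ) (x : E), m • x ∈ H ⊔ C → ∃ h ∈ H, m • (x - h) ∈ C}
  have hbot : (⊥ : AddSubgroup E) ∈ P := by
    refine ⟨fun x _ hx => by simpa using hx, fun m x hx => ?_⟩
    obtain ⟨h, hh, e⟩ := hp m x (by simpa using hx)
    exact ⟨h, hh, by simp [smul_sub, e]⟩
  obtain ⟨C, -, hC⟩ := zorn_le_nonempty₀ P (by
    intro c hc hchain y hy
    have hdir : DirectedOn (· ≤ ·) c := hchain.directedOn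
    refine ⟨sSup c, ⟨?_, ?_⟩, fun z hz => le_sSup hz⟩
    · intro x hxH hx
      obtain ⟨K, hK, hxK⟩ := (AddSubgroup.mem_sSup_of_directedOn ⟨y, hy⟩ hdir).1 hx
      exact (hc hK).1 x hxH hxK
    · intro m x hx
      obtain ⟨h, hh, k, hk, e⟩ := AddSubgroup.mem_sup.1 hx
      obtain ⟨K, hK, hkK⟩ := (AddSubgroup.mem_sSup_of_directedOn ⟨y, hy⟩ hdir).1 hk
      obtain ⟨h', hh', e'⟩ := (hc hK).2 m x (AddSubgroup.mem_sup.2 ⟨h, hh, k, hkK, e⟩)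
      exact ⟨h', hh', le_sSup hK e'⟩) ⊥ hbot
  have hCP : C ∈ P := hC.prop
  refine ⟨C, ?_⟩
  have hexp : AddMonoid.ExponentExists (E ⧸ (H ⊔ C)) := by
    refine ⟨n, hn, fun g => ?_⟩
    obtain ⟨x, rfl⟩ := QuotientAddGroup.mk_surjective g
    rw [← QuotientAddGroup.mk_nsmul, QuotientAddGroup.eq_zero_iff]
    exact (le_sup_left : H ≤ H ⊔ C) (hb x)
  obtain ⟨gq, hg⟩ := AddMonoid.exists_addOrderOf_eq_exponent hexp
  obtain ⟨g, rfl⟩ := QuotientAddGroup.mk_surjective gq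
  obtain ⟨N, hN⟩ : ∃ N, N = AddMonoid.exponent (E ⧸ (H ⊔ C)) := ⟨_, rfl⟩
  rw [← hN] at hg
  have hNg : N • g ∈ H ⊔ C := by
    rw [← QuotientAddGroup.eq_zero_iff, QuotientAddGroup.mk_nsmul, ← hg, addOrderOf_nsmul_eq_zero]
  have hNx : ∀ x : E, N • x ∈ H ⊔ C := by
    intro x
    rw [← QuotientAddGroup.eq_zero_iff, QuotientAddGroup.mk_nsmul, hN,
      AddMonoid.exponent_nsmul_eq_zero]
  obtain ⟨h₀, hh₀, heC⟩ := hCP.2 N g hNg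
  obtain ⟨e, he⟩ : ∃ e, e = g - h₀ := ⟨_, rfl⟩
  rw [← he] at heC
  have hmk : (QuotientAddGroup.mk e : E ⧸ (H ⊔ C)) = QuotientAddGroup.mk g := by
    rw [QuotientAddGroup.eq, he]
    have : -(g - h₀) + g = h₀ := by abel
    rw [this]
    exact (le_sup_left : H ≤ H ⊔ C) hh₀
  have hdvd : ∀ t : ℤ, t • e ∈ H ⊔ C → (N : ℤ) ∣ t := by
    intro t ht
    rw [← QuotientAddGroup.eq_zero_iff, QuotientAddGroup.mk_zsmul, hmk] at ht
    rw [← hg]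
    exact addOrderOf_dvd_iff_zsmul_eq_zero.2 ht
  have heC' : ((N : ℤ)) • e ∈ C := by simpa using heC
  have hC' : C ⊔ AddSubgroup.zmultiples e ∈ P := by
    refine ⟨?_, ?_⟩
    · intro x hxH hx
      obtain ⟨c, hc, k, hk, rfl⟩ := AddSubgroup.mem_sup.1 hx
      obtain ⟨t, rfl⟩ := AddSubgroup.mem_zmultiples_iff.1 hk
      have h1 : t • e ∈ H ⊔ C :=
        AddSubgroup.mem_sup.2 ⟨c + t • e, hxH, -c, C.neg_mem hc, by abel⟩
      obtain ⟨s, rfl⟩ := hdvd t h1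
      refine hCP.1 _ hxH (C.add_mem hc ?_)
      rw [mul_comm, mul_smul]
      exact C.zsmul_mem heC' s
    · intro m x hx
      obtain ⟨h, hh, k, hk, e1⟩ := AddSubgroup.mem_sup.1 hx
      obtain ⟨c, hc, k', hk', rfl⟩ := AddSubgroup.mem_sup.1 hk
      obtain ⟨t, rfl⟩ := AddSubgroup.mem_zmultiples_iff.1 hk'
      -- `gcd m N` divides `t`
      have hd : (Int.gcd m N : ℤ) ∣ t := by
        obtain ⟨q, hq⟩ : (Int.gcd m N : ℤ) ∣ N := Int.gcd_dvd_right ..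
        obtain ⟨r, hr⟩ : (Int.gcd m N : ℤ) ∣ m := Int.gcd_dvd_left ..
        have h2 : (q * t) • e ∈ H ⊔ C := by
          have h3 : (q * t) • e = r • (N • x) - q • (h + c) := by
            have h4 : q • (m • x) = r • (N • x) := by
              rw [← natCast_zsmul x m, ← natCast_zsmul x N, smul_smul, smul_smul]
              congr 1
              linear_combination q * hr - r * hq
            rw [← h4, ← e1, mul_smul]
            simp only [smul_add]
            abel
          rw [h3]
          exact sub_mem (zsmul_mem (hNx x) _) (zsmul_mem (AddSubgroup.mem_sup.2 ⟨h, hh, c, hc, rfl⟩) _)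
        have h5 := hdvd _ h2
        have hq0 : q ≠ 0 := by
          rintro rfl
          have : N = 0 := by simpa using hq
          exact hexp.exponent_ne_zero (hN ▸ this)
        rw [hq, mul_comm] at h5
        exact (mul_dvd_mul_iff_left hq0).1 h5
      obtain ⟨s, hs⟩ := hd
      have hbez := Int.gcd_eq_gcd_ab m N
      obtain ⟨u, v, huv⟩ : ∃ u v : ℤ, (Int.gcd m N : ℤ) = m * u + N * v := ⟨_, _, hbez⟩
      have ht : t • e = m • ((s * u) • e) + (s * v) • ((N : ℤ) • e) := by
        rw [← natCast_zsmul _ m, smul_smul, smul_smul, ← add_smul, hs, huv]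
        congr 1
        ring
      obtain ⟨h', hh', e2⟩ := hCP.2 m (x - (s * u) • e) (by
        refine AddSubgroup.mem_sup.2 ⟨h, hh, c + (s * v) • ((N : ℤ) • e),
          C.add_mem hc (C.zsmul_mem heC' _), ?_⟩
        rw [smul_sub, ← e1, ht]
        abel)
      refine ⟨h', hh', AddSubgroup.mem_sup.2 ⟨_, e2, m • ((s * u) • e), ?_, ?_⟩⟩
      · exact nsmul_mem (zsmul_mem (AddSubgroup.mem_zmultiples e) _) _
      · rw [← smul_add]
        congr 1
        abel
  have hle : C ⊔ AddSubgroup.zmultiples e ≤ C := hC.le_of_ge hC' le_sup_left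
  have he1 : (1 : ℤ) • e ∈ H ⊔ C := by
    rw [one_smul]
    exact (le_sup_right : C ≤ H ⊔ C)
      (hle ((le_sup_right : AddSubgroup.zmultiples e ≤ _) (AddSubgroup.mem_zmultiples e)))
  have hN1 : N = 1 := by
    have := hdvd 1 he1
    exact Nat.dvd_one.1 (by exact_mod_cast this)
  constructor
  · rw [AddSubgroup.disjoint_def]
    intro x hx hx'
    exact hCP.1 x hx hx'
  · rw [codisjoint_iff, eq_top_iff]
    intro x _
    simpa [hN1] using hNx x

/-- A pure surjection onto a bounded group splits. -/
theorem exists_section_of_pure {A B : Type*} [AddCommGroup A] [AddCommGroup B]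
    (π : A →+ B) (hπ : Function.Surjective π) (n : ℕ) (hn : 0 < n) (hb : ∀ b : B, n • b = 0)
    (hp : ∀ (m : ℕ) (x : A), π (m • x) = 0 → ∃ h, π h = 0 ∧ m • x = m • h) :
    ∃ s : B →+ A, ∀ b, π (s b) = b := by
  obtain ⟨C, hC⟩ := exists_isCompl_of_pure π.ker n hn (fun x => by simp [AddMonoidHom.mem_ker, hb])
    (by simpa only [AddMonoidHom.mem_ker] using hp)
  have hbij : Function.Bijective (π.comp C.subtype) := by
    constructor
    · rw [injective_iff_map_eq_zero]
      intro a ha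
      exact Subtype.ext ((AddSubgroup.disjoint_def.1 hC.disjoint) ha a.2)
    · intro b
      obtain ⟨a, rfl⟩ := hπ b
      have : a ∈ π.ker ⊔ C := by rw [hC.sup_eq_top]; trivial
      obtain ⟨k, hk, c, hc, rfl⟩ := AddSubgroup.mem_sup.1 this
      exact ⟨⟨c, hc⟩, by simp [(AddMonoidHom.mem_ker).1 hk]⟩
  let eqv := AddEquiv.ofBijective _ hbij
  exact ⟨C.subtype.comp eqv.symm.toAddMonoidHom, fun b => eqv.apply_symm_apply b⟩

open CategoryTheory Abelian

theorem ext_comp_nsmul {X Y Z : ModuleCat.{0} ℤ} (f : X ⟶ Y) (k : ℕ) (y : Ext Y Z k) (n : ℕ) :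
    (Ext.mk₀ f).comp (n • y) (zero_add k) = (Ext.mk₀ (n • f)).comp y (zero_add k) := by
  induction n with
  | zero => simp
  | succ n ih => rw [succ_nsmul, succ_nsmul, Ext.comp_add, Ext.mk₀_add, Ext.add_comp, ih]

/-- Any additive map is `ℤ`-linear. -/
theorem exists_intLin {A B : Type*} [AddCommGroup A] [AddCommGroup B] [Module ℤ A] [Module ℤ B]
    (f : A →+ B) : ∃ g : A →ₗ[ℤ] B, ∀ a, g a = f a :=
  ⟨{ toFun := f
     map_add' := f.map_add
     map_smul' := fun r x => by simpa using map_intCast_smul f ℤ ℤ r x }, fun _ => rfl⟩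

theorem shortExact_cokernel {X Y : ModuleCat.{0} ℤ} (f : X ⟶ Y) [Mono f] :
    (ShortComplex.mk f (Limits.cokernel.π f) (Limits.cokernel.condition _)).ShortExact :=
  { exact := ShortComplex.exact_of_g_is_cokernel _ (Limits.cokernelIsCokernel _)
    mono_f := inferInstanceAs (Mono f)
    epi_g := inferInstanceAs (Epi (Limits.cokernel.π f)) }

theorem ext_two_eq_zero (X H : ModuleCat.{0} ℤ) (x : Ext X H 2) : x = 0 := by
  let S : ShortComplex (ModuleCat.{0} ℤ) :=
    ShortComplex.mk (Injective.ι H) (Limits.cokernel.π (Injective.ι H)) (Limits.cokernel.condition _)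
  have hS : S.ShortExact :=
    { exact := ShortComplex.exact_of_g_is_cokernel _ (Limits.cokernelIsCokernel _)
      mono_f := inferInstanceAs (Mono (Injective.ι H))
      epi_g := inferInstanceAs (Epi (Limits.cokernel.π (Injective.ι H))) }
  have hI : Injective S.X₂ := inferInstanceAs (Injective (Injective.under H))
  have hB : Module.Baer ℤ S.X₂ := Module.Baer.of_injective
    (Module.injective_module_of_injective_object (inj := hI))
  have hB3 : Module.Baer ℤ S.X₃ := by
    intro J g
    obtain ⟨l, hl⟩ := Module.projective_lifting_property S.g.hom g
      ((ModuleCat.epi_iff_surjective _).1 hS.epi_g)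
    obtain ⟨k, hk⟩ := hB J l
    exact ⟨S.g.hom ∘ₗ k, fun z hz => by simp [hk z hz, ← hl]⟩
  have hI3 : Injective S.X₃ :=
    Module.injective_object_of_injective_module (inj := hB3.injective)
  obtain ⟨y, hy⟩ := Ext.covariant_sequence_exact₁ X hS x (Ext.eq_zero_of_injective _) (rfl : 1 + 1 = 2)
  rw [← hy, Ext.eq_zero_of_injective y, Ext.zero_comp]

/-- A class vanishing on the kernel of `f` is a pullback along `f`. -/
theorem exists_comp_eq {G G' H : ModuleCat.{0} ℤ} (f : G ⟶ G') (x : Ext G H 1)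
    (hx : (Ext.mk₀ (Limits.kernel.ι f)).comp x (zero_add 1) = 0) :
    ∃ y : Ext G' H 1, (Ext.mk₀ f).comp y (zero_add 1) = x := by
  obtain ⟨x₁, h₁⟩ := Ext.contravariant_sequence_exact₂
    (shortExact_cokernel (Limits.kernel.ι f)) H x hx
  obtain ⟨y, hy⟩ := Ext.contravariant_sequence_exact₁
    (shortExact_cokernel (Abelian.factorThruCoimage f)) H x₁ (rfl : 1 + 1 = 2)
    (ext_two_eq_zero _ _ _)
  refine ⟨y, ?_⟩
  rw [← h₁, ← hy]
  dsimp only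
  rw [Ext.mk₀_comp_mk₀_assoc]
  congr 2
  exact (Abelian.coimage.fac f).symm

/-- The `n`-torsion of `G` lifts to `E` if the sequence is pure. -/
theorem exists_lift_of_pure (S : ShortComplex (ModuleCat.{0} ℤ)) (hS : S.ShortExact)
    (hp : ∀ n : ℕ, 0 < n → ∀ x : S.X₂,
        ((x ∈ Set.range S.f ∧ ∃ e : S.X₂, n • e = x) ↔ ∃ y ∈ Set.range S.f, n • y = x))
    (n : ℕ) (hn : 0 < n) (K : ModuleCat.{0} ℤ) (k : K ⟶ S.X₃) (hK : ∀ b : K, n • b = 0) :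
    ∃ s : K ⟶ S.X₂, s ≫ S.g = k := by
  have hex : Function.Exact S.f S.g :=
    (ShortComplex.ShortExact.moduleCat_exact_iff_function_exact S).1 hS.exact
  have hsurj : Function.Surjective S.g := (ModuleCat.epi_iff_surjective _).1 hS.epi_g
  let A : AddSubgroup (S.X₂ × K) :=
    { carrier := {p | S.g p.1 = k p.2}
      add_mem' := by
        intro a b ha hb
        simp only [Set.mem_ofPred_eq] at *
        simp [ha, hb]
      zero_mem' := by simp
      neg_mem' := by
        intro a ha
        simp only [Set.mem_ofPred_eq] at *
        simp [ha] }
  obtain ⟨s, hs⟩ := exists_section_of_pure ((AddMonoidHom.snd S.X₂ K).comp A.subtype)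
    (fun b => by
      obtain ⟨e, he⟩ := hsurj (k b)
      exact ⟨⟨(e, b), he⟩, rfl⟩) n hn hK (by
    intro m x hx
    rcases Nat.eq_zero_or_pos m with rfl | hm
    · exact ⟨0, by simp, by simp⟩
    obtain ⟨⟨e, b⟩, hx'⟩ := x
    have hx' : S.g e = k b := hx'
    have hx : m • b = 0 := hx
    have h1 : S.g (m • e) = 0 := by
      rw [map_nsmul, hx', ← map_nsmul, hx, map_zero]
    obtain ⟨y, hy, hye⟩ := (hp m hm (m • e)).1 ⟨(hex _).1 h1, e, rfl⟩
    have hy0 : S.g y = 0 := (hex _).2 hy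
    refine ⟨⟨(y, 0), by change S.g y = k 0; rw [hy0, map_zero]⟩, rfl, ?_⟩
    apply Subtype.ext
    apply Prod.ext
    · exact hye.symm
    · change m • b = m • (0 : K)
      rw [hx, smul_zero])
  obtain ⟨l, hl⟩ := exists_intLin (((AddMonoidHom.fst S.X₂ K).comp A.subtype).comp s)
  refine ⟨ModuleCat.ofHom l, ?_⟩
  ext b
  change S.g (l b) = k b
  rw [hl]
  have h2 : S.g (s b).1.1 = k (s b).1.2 := (s b).2
  have h3 : (s b).1.2 = b := hs b
  rw [h3] at h2
  exact h2

/-- A short exact sequence `0 → H → E → G → 0` of abelian groups (ℤ-modules),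
given as a short exact complex `S` with `S.X₁ = H`, `S.X₂ = E`, `S.X₃ = G`, is pure
(image of `H` in `E` intersected with `nE` equals `n ·` (image of `H`) for all `n ≥ 1`)
iff its extension class in `Ext¹(G,H)` lies in `n · Ext¹(G,H)` for every `n ≥ 1`,
i.e. lies in `Pext¹(G,H)`. -/
theorem pure_iff_extClass_mem_pext (S : ShortComplex (ModuleCat.{0} ℤ))
    (hS : S.ShortExact) :
    (∀ n : ℕ, 0 < n → ∀ x : S.X₂,
        ((x ∈ Set.range S.f ∧ ∃ e : S.X₂, n • e = x) ↔ ∃ y ∈ Set.range S.f, n • y = x)) ↔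
      (∀ n : ℕ, 1 ≤ n → ∃ y : Abelian.Ext S.X₃ S.X₁ 1, n • y = hS.extClass) := by
  constructor
  · intro hp n hn
    have hK : ∀ b : ↑(Limits.kernel (n • 𝟙 S.X₃)), n • b = 0 := by
      have h1 : n • 𝟙 (Limits.kernel (n • 𝟙 S.X₃)) = 0 := by
        rw [← cancel_mono (Limits.kernel.ι (n • 𝟙 S.X₃))]
        have h2 := Limits.kernel.condition (n • 𝟙 S.X₃)
        rw [Preadditive.comp_nsmul, Category.comp_id] at h2
        rw [Preadditive.nsmul_comp, Category.id_comp, h2, Limits.zero_comp]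
      intro b
      have h3 := congrArg (fun φ => φ.hom b) h1
      simpa using h3
    obtain ⟨s, hs⟩ := exists_lift_of_pure S hS hp n hn _ (Limits.kernel.ι (n • 𝟙 S.X₃)) hK
    obtain ⟨y, hy⟩ := exists_comp_eq (n • 𝟙 S.X₃) hS.extClass (by
      rw [← hs, ← Abelian.Ext.mk₀_comp_mk₀_assoc, hS.comp_extClass, Abelian.Ext.comp_zero])
    refine ⟨y, ?_⟩
    rw [← hy, ← ext_comp_nsmul, Abelian.Ext.mk₀_id_comp]
  · intro hd n hn x
    have hex : Function.Exact S.f S.g :=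
      (ShortComplex.ShortExact.moduleCat_exact_iff_function_exact S).1 hS.exact
    constructor
    · rintro ⟨hx, e, rfl⟩
      obtain ⟨y, hy⟩ := hd n hn
      have hge : n • S.g e = 0 := by
        rw [← map_nsmul]
        exact (hex _).2 hx
      let φ₀ : ZMod n →+ S.X₃ := ZMod.lift n ⟨zmultiplesHom S.X₃ (S.g e), by simpa using hge⟩
      have hφ₀ : φ₀ 1 = S.g e := by
        have h := ZMod.lift_coe n
          (⟨zmultiplesHom S.X₃ (S.g e), by simpa using hge⟩ : {f : ℤ →+ S.X₃ // f n = 0}) 1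
        simpa using h
      obtain ⟨l, hl⟩ := exists_intLin φ₀
      have hnl : n • (ModuleCat.ofHom l) = 0 := by
        ext b
        change n • l b = 0
        rw [← map_nsmul]
        simp
      obtain ⟨z, hz⟩ := Abelian.Ext.covariant_sequence_exact₃ _ hS
        (Abelian.Ext.mk₀ (ModuleCat.ofHom l)) (zero_add 1) (by
          rw [← hy, ext_comp_nsmul, hnl]
          simp)
      obtain ⟨ψ, rfl⟩ := (Abelian.Ext.mk₀_bijective _ _).2 z
      rw [Abelian.Ext.mk₀_comp_mk₀] at hz
      have hψ := (Abelian.Ext.mk₀_bijective _ _).1 hz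
      have h1 : S.g (ψ (1 : ZMod n)) = S.g e := by
        have h2 := congrArg (fun q => q.hom (1 : ZMod n)) hψ
        have h3 : l 1 = S.g e := by rw [hl, hφ₀]
        exact h2.trans h3
      have h4 : n • ψ (1 : ZMod n) = 0 := by
        rw [← map_nsmul]
        have : n • (1 : ZMod n) = 0 := by simp
        exact (congrArg ψ this).trans (map_zero _)
      refine ⟨e - ψ (1 : ZMod n), (hex _).1 ?_, ?_⟩
      · rw [map_sub, h1, sub_self]
      · rw [smul_sub, h4, sub_zero]
    · rintro ⟨y, ⟨h, rfl⟩, rfl⟩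
      exact ⟨⟨n • h, by rw [map_nsmul]⟩, _, rfl⟩
end

section
/- A short exact sequence of abelian groups 0 → H → E →π→ G → 0 is pure if and only if it splits when restricted to every finitely generated subgroup of G; that is, if and only if for every finitely generated subgroup F ⊆ G there is a homomorphism s : F → E with π∘s equal to the inclusion F ⊆ G. -/
theorem pure_lift_zmod {G H E : Type} [AddCommGroup G] [AddCommGroup H]
    [AddCommGroup E] (ι : H →+ E) (π : E →+ G) (hπ : Function.Surjective π)
    (hexact : ∀ e : E, π e = 0 ↔ e ∈ ι.range)
    (hp : ∀ n : ℕ, 0 < n → ι.range ⊓ (n • AddMonoidHom.id E).range = (n • ι).range)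
    (n : ℕ) (hn : 0 < n) (f : ZMod n →+ G) : ∃ s : ZMod n →+ E, π.comp s = f := by
  obtain ⟨e, he⟩ := hπ (f 1)
  have h0 : π (n • e) = 0 := by
    rw [map_nsmul, he, ← map_nsmul]
    simp
  have h1 : n • e ∈ (n • ι).range := by
    rw [← hp n hn]
    exact ⟨(hexact _).1 h0, ⟨e, by simp⟩⟩
  obtain ⟨h, hh⟩ := h1
  have hh' : n • ι h = n • e := hh
  have h2 : π (ι h) = 0 := (hexact _).2 ⟨h, rfl⟩
  have h3 : zmultiplesHom E (e - ι h) (n : ℤ) = 0 := by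
    simp [smul_sub, hh']
  refine ⟨ZMod.lift n ⟨zmultiplesHom E (e - ι h), h3⟩, ?_⟩
  ext x
  obtain ⟨k, rfl⟩ := ZMod.intCast_surjective x
  have : (k : ZMod n) = k • (1 : ZMod n) := by simp
  simp only [AddMonoidHom.comp_apply, ZMod.lift_coe]
  rw [this, map_zsmul f, ← he]
  simp [h2]

/-- A short exact sequence of abelian groups `0 → H → E →π→ G → 0` is pure
(i.e. `(image of H in E) ∩ nE = n·(image of H in E)` for every `n ≥ 1`)
iff it splits when restricted to every finitely generated subgroup `F ⊆ G`,
i.e. there is `s : F →+ E` with `π ∘ s` equal to the inclusion `F ⊆ G`. -/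
theorem pure_iff_splits_on_fg_subgroups (G H E : Type) [AddCommGroup G] [AddCommGroup H]
    [AddCommGroup E] (ι : H →+ E) (π : E →+ G)
    (hι : Function.Injective ι) (hπ : Function.Surjective π)
    (hexact : ∀ e : E, π e = 0 ↔ e ∈ ι.range) :
    (∀ n : ℕ, 0 < n → ι.range ⊓ (n • AddMonoidHom.id E).range = (n • ι).range) ↔
      (∀ F : AddSubgroup G, F.FG → ∃ s : ↥F →+ E, π.comp s = F.subtype) := by
  classical
  constructor
  · intro hp F hF
    have : AddGroup.FG F := (AddGroup.fg_iff_addSubgroup_fg F).2 hF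
    obtain ⟨n, I, _, p, hpr, k, ⟨e⟩⟩ := AddCommGroup.equiv_free_prod_directSum_zmod F
    let f := F.subtype.comp e.symm.toAddMonoidHom
    have hl : ∃ s, π.comp s = f := by
      choose a ha using fun i : Fin n => hπ (f (Finsupp.single i 1, 0))
      choose b hb using fun i : I => pure_lift_zmod ι π hπ hexact hp (p i ^ k i)
        (pow_pos (hpr i).pos _)
        ((f.comp (AddMonoidHom.inr _ _)).comp (DirectSum.of (fun i => ZMod (p i ^ k i)) i))
      refine ⟨AddMonoidHom.coprod (Finsupp.liftAddHom fun i => zmultiplesHom E (a i))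
        (DirectSum.toAddMonoid b), ?_⟩
      have key : ∀ i x, π (b i x) = f (0, DirectSum.of (fun i => ZMod (p i ^ k i)) i x) :=
        fun i x => DFunLike.congr_fun (hb i) x
      have hext : ∀ u v : (Fin n →₀ ℤ) × (DirectSum I fun i => ZMod (p i ^ k i)) →+ G,
          u.comp (AddMonoidHom.inl _ _) = v.comp (AddMonoidHom.inl _ _) →
          u.comp (AddMonoidHom.inr _ _) = v.comp (AddMonoidHom.inr _ _) → u = v := by
        intro u v h1 h2
        rw [← AddMonoidHom.coprod_unique u, ← AddMonoidHom.coprod_unique v, h1, h2]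
      refine hext _ _ ?_ ?_
      · ext i
        simp [ha]
      · refine DirectSum.addHom_ext fun i x => ?_
        simp [key]
    obtain ⟨s, hs⟩ := hl
    refine ⟨s.comp e.toAddMonoidHom, ?_⟩
    ext x
    have := DFunLike.congr_fun hs (e x)
    simpa [f] using this
  · intro hs n hn
    apply le_antisymm
    · rintro x ⟨hx, e, he⟩
      have he' : n • e = x := he
      obtain ⟨s, hs⟩ := hs (AddSubgroup.zmultiples (π e)) ⟨{π e}, by
        simp [AddSubgroup.zmultiples_eq_closure]⟩
      let g : AddSubgroup.zmultiples (π e) := ⟨π e, AddSubgroup.mem_zmultiples _⟩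
      have h1 : π (s g) = π e := DFunLike.congr_fun hs g
      have h2 : n • g = 0 := by
        apply Subtype.ext
        change n • π e = 0
        rw [← map_nsmul, he']
        exact (hexact x).2 hx
      obtain ⟨h, hh⟩ := (hexact (e - s g)).1 (by rw [map_sub, h1, sub_self])
      refine ⟨h, ?_⟩
      change n • ι h = x
      rw [hh, smul_sub, ← map_nsmul, h2, map_zero, sub_zero, he']
    · rintro x ⟨h, rfl⟩
      exact ⟨⟨n • h, by simp⟩, ⟨ι h, by simp⟩⟩
end

section
/- If the abelian group G is an (internal) direct sum of cyclic subgroups, then for every abelian group H one has Pext¹(G,H) = 0, i.e. ⋂_{n≥1} n·Ext¹(G,H) = {0}. -/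
open CategoryTheory DirectSum

/-- Extending `f : P₁ → H` along `d : P₁ → P₀`. -/
theorem pext_aux_extend {P₁ P₀ G H ι : Type} [AddCommGroup P₁] [AddCommGroup P₀] [AddCommGroup G]
    [AddCommGroup H] [DecidableEq ι] (C : ι → AddSubgroup G)
    (hcyc : ∀ i, ∃ g : G, C i = AddSubgroup.closure {g})
    (hint : DirectSum.IsInternal C)
    (d : P₁ →ₗ[ℤ] P₀) (π : P₀ →ₗ[ℤ] G) (hπ : Function.Surjective π)
    (hex : ∀ x, π x = 0 ↔ ∃ y, d y = x)
    (f : P₁ →ₗ[ℤ] H) (hf : ∀ y, d y = 0 → f y = 0)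
    (hdiv : ∀ n : ℕ, 1 ≤ n → ∃ (f' : P₁ →ₗ[ℤ] H) (g' : P₀ →ₗ[ℤ] H), f = n • f' + g' ∘ₗ d) :
    ∃ g : P₀ →ₗ[ℤ] H, g ∘ₗ d = f := by
  choose c hc using hcyc
  choose p hp using fun i => hπ (c i)
  have h1 : ∀ i, ∃ y, d y = addOrderOf (c i) • p i := fun i =>
    (hex _).1 (by rw [map_nsmul, hp, addOrderOf_nsmul_eq_zero])
  choose y hy using h1
  have h2 : ∀ i, ∃ h : H, f (y i) = addOrderOf (c i) • h := by
    intro i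
    rcases Nat.eq_zero_or_pos (addOrderOf (c i)) with h0 | h0
    · refine ⟨0, ?_⟩
      rw [hf _ (by rw [hy, h0, zero_smul]), smul_zero]
    · obtain ⟨f', g', e⟩ := hdiv _ h0
      refine ⟨f' (y i) + g' (p i), ?_⟩
      rw [smul_add, ← map_nsmul g', ← hy]
      simpa using congrArg (fun k => k (y i)) e
  choose h hh using h2
  -- the two maps out of `F × P₁`
  let A : ((ι →₀ ℤ) × P₁) →ₗ[ℤ] P₀ := (Finsupp.linearCombination ℤ p).coprod d
  let B : ((ι →₀ ℤ) × P₁) →ₗ[ℤ] H := (Finsupp.linearCombination ℤ h).coprod f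
  have hπA : ∀ a : ι →₀ ℤ, π (Finsupp.linearCombination ℤ p a) = a.sum fun i n => n • c i := by
    intro a
    rw [Finsupp.linearCombination_apply, Finsupp.sum, map_sum]
    simp [Finsupp.sum, hp]
  have hcm : ∀ i, c i ∈ C i := fun i => by
    rw [hc i]; exact AddSubgroup.subset_closure rfl
  have hA : Function.Surjective A := by
    intro x
    have : ∀ g : G, ∃ a : ι →₀ ℤ, π (Finsupp.linearCombination ℤ p a) = g := by
      intro g
      have hg : g ∈ (⨆ i, C i) := by
        obtain ⟨D, rfl⟩ := hint.2 g
        induction D using DirectSum.induction_on with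
        | zero => rw [map_zero]; exact zero_mem _
        | of i x =>
          rw [DirectSum.coeAddMonoidHom_of]
          exact AddSubgroup.mem_iSup_of_mem i x.2
        | add x y hx hy => rw [map_add]; exact add_mem hx hy
      induction hg using AddSubgroup.iSup_induction' with
      | hp i x hx =>
        rw [hc i, AddSubgroup.mem_closure_singleton] at hx
        obtain ⟨n, rfl⟩ := hx
        exact ⟨Finsupp.single i n, by simp [hp]⟩
      | h1 => exact ⟨0, by simp⟩
      | hadd x y _ _ hx hy =>
        obtain ⟨a, rfl⟩ := hx
        obtain ⟨b, rfl⟩ := hy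
        exact ⟨a + b, by simp⟩
    obtain ⟨a, ha⟩ := this (π x)
    obtain ⟨k, hk⟩ := (hex (x - Finsupp.linearCombination ℤ p a)).1 (by rw [map_sub, ha, sub_self])
    exact ⟨(a, k), by simp [A, hk]⟩
  have hker : LinearMap.ker A ≤ LinearMap.ker B := by
    rintro ⟨a, x⟩ hx
    simp only [LinearMap.mem_ker, A, B, LinearMap.coprod_apply] at hx ⊢
    have h3 : (a.sum fun i n => n • c i) = 0 := by
      have := congrArg π hx
      rwa [map_add, hπA, (hex (d x)).2 ⟨x, rfl⟩, add_zero, map_zero] at this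
    have h4 : ∀ i, a i • c i = 0 := by
      intro i
      let D : DirectSum ι (fun i => C i) :=
        a.sum fun i n => DirectSum.of (fun i => C i) i (n • ⟨c i, hcm i⟩)
      have hD : D = 0 := by
        apply hint.1
        rw [map_zero]
        simp only [D, Finsupp.sum, map_sum, DirectSum.coeAddMonoidHom_of]
        simpa [Finsupp.sum] using h3
      have h5 : ((D i : C i) : G) = a i • c i := by
        simp only [D, Finsupp.sum, DirectSum.sum_apply]
        by_cases hi : i ∈ a.support
        · rw [Finset.sum_eq_single i]
          · rw [DirectSum.of_eq_same]; rfl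
          · intro b _ hb
            exact DirectSum.of_eq_of_ne _ _ _ hb.symm
          · exact fun h => absurd hi h
        · rw [Finset.sum_eq_zero]
          · simp [Finsupp.notMem_support_iff.1 hi]
          · intro b hb
            refine DirectSum.of_eq_of_ne _ _ _ ?_
            rintro rfl
            exact hi hb
      rw [← h5, hD]; rfl
    have h6 : ∀ i, ∃ b : ℤ, a i = b * addOrderOf (c i) := fun i => by
      obtain ⟨b, hb⟩ := addOrderOf_dvd_iff_zsmul_eq_zero.2 (h4 i)
      exact ⟨b, by rw [hb, mul_comm]⟩
    choose b hb using h6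
    have h7 : Finsupp.linearCombination ℤ p a = d (∑ i ∈ a.support, b i • y i) := by
      rw [Finsupp.linearCombination_apply, Finsupp.sum, map_sum]
      refine Finset.sum_congr rfl fun i _ => ?_
      rw [map_smul, hy, hb i, mul_smul, natCast_zsmul]
    have h8 : Finsupp.linearCombination ℤ h a = f (∑ i ∈ a.support, b i • y i) := by
      rw [Finsupp.linearCombination_apply, Finsupp.sum, map_sum]
      refine Finset.sum_congr rfl fun i _ => ?_
      rw [map_smul, hh, hb i, mul_smul, natCast_zsmul]
    rw [h8, ← map_add]
    apply hf
    rw [map_add, ← h7, hx]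
  refine ⟨(LinearMap.ker A).liftQ B hker ∘ₗ (A.quotKerEquivOfSurjective hA).symm.toLinearMap, ?_⟩
  ext x
  have : d x = A.quotKerEquivOfSurjective hA (Submodule.Quotient.mk (0, x)) := by
    simp [A]
  simp only [LinearMap.comp_apply, LinearEquiv.coe_coe]
  rw [this, LinearEquiv.symm_apply_apply]
  simp [B]

/-- The same with arbitrary `ℤ`-module structures. -/
theorem pext_aux_extend_module {P₁ P₀ G H ι : Type} [AddCommGroup P₁] [AddCommGroup P₀]
    [AddCommGroup G] [AddCommGroup H] [m₁ : Module ℤ P₁] [m₀ : Module ℤ P₀]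
    [mG : Module ℤ G] [mH : Module ℤ H] [DecidableEq ι] (C : ι → AddSubgroup G)
    (hcyc : ∀ i, ∃ g : G, C i = AddSubgroup.closure {g})
    (hint : DirectSum.IsInternal C)
    (d : P₁ →ₗ[ℤ] P₀) (π : P₀ →ₗ[ℤ] G) (hπ : Function.Surjective π)
    (hex : ∀ x, π x = 0 ↔ ∃ y, d y = x)
    (f : P₁ →ₗ[ℤ] H) (hf : ∀ y, d y = 0 → f y = 0)
    (hdiv : ∀ n : ℕ, 1 ≤ n → ∃ (f' : P₁ →ₗ[ℤ] H) (g' : P₀ →ₗ[ℤ] H), f = n • f' + g' ∘ₗ d) :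
    ∃ g : P₀ →ₗ[ℤ] H, g ∘ₗ d = f := by
  obtain rfl : m₁ = AddCommGroup.toIntModule P₁ := Subsingleton.elim _ _
  obtain rfl : m₀ = AddCommGroup.toIntModule P₀ := Subsingleton.elim _ _
  obtain rfl : mG = AddCommGroup.toIntModule G := Subsingleton.elim _ _
  obtain rfl : mH = AddCommGroup.toIntModule H := Subsingleton.elim _ _
  exact pext_aux_extend C hcyc hint d π hπ hex f hf hdiv

/-- Divisible elements of the homology of a short complex. -/
theorem pext_aux_homology (S : ShortComplex (ModuleCat.{0} ℤ))
    (h : ∀ z : S.X₂, S.g.hom z = 0 →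
      (∀ n : ℕ, 1 ≤ n → ∃ (w : S.X₂) (y : S.X₁), z = n • w + S.f.hom y) →
      ∃ y : S.X₁, S.f.hom y = z)
    (x : S.homology) (hx : ∀ n : ℕ, 1 ≤ n → ∃ y, n • y = x) : x = 0 := by
  have hsurj : Function.Surjective S.homologyπ.hom :=
    (ModuleCat.epi_iff_surjective _).1 inferInstance
  have hinj : Function.Injective S.iCycles.hom :=
    (ModuleCat.mono_iff_injective _).1 inferInstance
  have hexact : ∀ z : S.cycles, S.homologyπ.hom z = 0 ↔ ∃ y, S.toCycles.hom y = z := by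
    have he : (ShortComplex.mk _ _ S.toCycles_comp_homologyπ).Exact :=
      ShortComplex.exact_of_g_is_cokernel _ S.homologyIsCokernel
    intro z
    constructor
    · exact fun hz => (ShortComplex.moduleCat_exact_iff _).1 he z hz
    · rintro ⟨y, rfl⟩
      exact ShortComplex.moduleCat_zero_apply (ShortComplex.mk _ _ S.toCycles_comp_homologyπ) y
  have hi : ∀ y, S.iCycles.hom (S.toCycles.hom y) = S.f.hom y := fun y => by
    rw [← S.toCycles_i]; rfl
  have hg : ∀ z, S.g.hom (S.iCycles.hom z) = 0 := fun z => by
    have := congrArg (fun k => k.hom z) S.iCycles_g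
    exact this
  obtain ⟨z, rfl⟩ := hsurj x
  obtain ⟨y, hy⟩ := h (S.iCycles.hom z) (hg z) (by
    intro n hn
    obtain ⟨w, hw⟩ := hx n hn
    obtain ⟨w, rfl⟩ := hsurj w
    obtain ⟨y, hy⟩ := (hexact (z - n • w)).1 (by rw [map_sub, map_nsmul, hw, sub_self])
    refine ⟨S.iCycles.hom w, y, ?_⟩
    rw [← hi, hy, map_sub, map_nsmul]; abel)
  exact (hexact z).2 ⟨y, hinj (by rw [hi, hy])⟩

/-- If the abelian group `G` is an internal direct sum of a family of cyclic subgroups,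
then for every abelian group `H` one has `Pext¹(G,H) = 0`. -/
theorem pext_eq_bot_of_directSum_of_cyclic (G H : Type) [AddCommGroup G] [AddCommGroup H]
    (ι : Type) [DecidableEq ι] (C : ι → AddSubgroup G)
    (hcyc : ∀ i, ∃ g : G, C i = AddSubgroup.closure {g})
    (hint : DirectSum.IsInternal C) :
    Pext1 G H = ⊥ := by
  rw [eq_bot_iff]
  intro x hx
  have hx' : ∀ n : ℕ, 1 ≤ n → ∃ y : Ext1 G H, n • y = x := by
    intro n hn
    simp only [Pext1, AddSubgroup.mem_iInf] at hx
    obtain ⟨y, hy⟩ := hx n hn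
    exact ⟨y, hy⟩
  rw [AddSubgroup.mem_bot]
  let P : ProjectiveResolution (ModuleCat.of ℤ G) := projectiveResolution _
  let L := P.complex.linearYonedaObj ℤ (ModuleCat.of ℤ H)
  let e : Ext1 G H ≃ₗ[ℤ] (L.sc' 0 1 2).homology :=
    (P.isoExt 1 (ModuleCat.of ℤ H) ≪≫
      ShortComplex.homologyMapIso (L.isoSc' 0 1 2 (by simp) (by simp))).toLinearEquiv
  apply e.injective
  rw [map_zero]
  refine pext_aux_homology _ ?_ _ ?_
  · intro (z : P.complex.X 1 ⟶ ModuleCat.of ℤ H) hz hn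
    have hz' : P.complex.d 2 1 ≫ z = 0 := hz
    let π : P.complex.X 0 ⟶ ModuleCat.of ℤ G := P.π.f 0
    have hE : (ShortComplex.mk _ _ P.complex_d_comp_π_f_zero).Exact :=
      ShortComplex.exact_of_g_is_cokernel _ P.isColimitCokernelCofork
    obtain ⟨g, hg⟩ := pext_aux_extend_module (P₁ := P.complex.X 1) (P₀ := P.complex.X 0)
      (H := H) C hcyc hint
      (P.complex.d 1 0).hom π.hom
      ((ModuleCat.epi_iff_surjective (P.π.f 0)).1 inferInstance)
      (fun x => ⟨fun hx => (ShortComplex.moduleCat_exact_iff _).1 hE x hx, by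
        rintro ⟨y, rfl⟩
        exact ShortComplex.moduleCat_zero_apply
          (ShortComplex.mk _ _ P.complex_d_comp_π_f_zero) y⟩)
      z.hom
      (fun y hy => by
        obtain ⟨w, rfl⟩ := (ShortComplex.moduleCat_exact_iff _).1 (P.exact_succ 0) y hy
        exact congrArg (fun k => k.hom w) hz')
      (fun n h1 => by
        obtain ⟨(w : P.complex.X 1 ⟶ ModuleCat.of ℤ H),
          (y : P.complex.X 0 ⟶ ModuleCat.of ℤ H), hw⟩ := hn n h1
        have hw' : z = n • w + P.complex.d 1 0 ≫ y := hw
        refine ⟨w.hom, y.hom, ?_⟩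
        rw [hw']
        rfl)
    exact ⟨ModuleCat.ofHom g, ModuleCat.hom_ext hg⟩
  · intro n hn
    obtain ⟨y, rfl⟩ := hx' n hn
    exact ⟨e y, (map_nsmul e n y).symm⟩
end

section
/- If the abelian group G is torsion-free, then for every abelian group H the group Ext¹(G,H) is divisible: for every x ∈ Ext¹(G,H) and every integer n ≥ 1 there exists y ∈ Ext¹(G,H) with n·y = x. Consequently Pext¹(G,H) = ⋂_{n≥1} n·Ext¹(G,H) equals all of Ext¹(G,H) and is divisible. -/
open CategoryTheory

/-- A subgroup of a projective abelian group is projective. -/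
lemma submodule_projective {P : Type} [AddCommGroup P] [Module.Projective ℤ P]
    (M : Submodule ℤ P) : Module.Projective ℤ M := by
  refine Module.Projective.of_lifting_property ?_
  intro A B _ _ _ _ q f hq
  obtain rfl : ‹Module ℤ A› = AddCommGroup.toIntModule A := Subsingleton.elim _ _
  let j : A →ₗ[ℤ] (CharacterModule A → AddCircle (1 : ℚ)) :=
    AddMonoidHom.toIntLinearMap (AddMonoidHom.pi fun c : CharacterModule A => (c : A →+ AddCircle (1 : ℚ)))
  have hj : Function.Injective j := by
    rw [injective_iff_map_eq_zero]
    intro a ha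
    exact CharacterModule.eq_zero_of_character_apply fun c => congrFun ha c
  let J := (LinearMap.ker q).map j
  have hdiv : DivisibleBy ((CharacterModule A → AddCircle (1 : ℚ)) ⧸ J) ℤ :=
    Function.Surjective.divisibleBy J.mkQ J.mkQ_surjective (fun a n => map_zsmul J.mkQ n a)
  let t := (LinearMap.ker q).mapQ J j (Submodule.le_comap_map _ _)
  let e := q.quotKerEquivOfSurjective hq
  obtain ⟨h, hh⟩ := (Module.Baer.of_divisible _).extension_property M.subtype M.injective_subtype
    (t ∘ₗ e.symm.toLinearMap ∘ₗ f)
  obtain ⟨k, hk⟩ := Module.projective_lifting_property J.mkQ h J.mkQ_surjective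
  have key : ∀ m : M, ∃ a : A, j a = k m ∧ q a = f m := by
    intro m
    obtain ⟨a, ha⟩ := hq (f m)
    have h1 : e.symm (f m) = Submodule.Quotient.mk a := by
      rw [LinearEquiv.symm_apply_eq, ← ha]; rfl
    have h2 : J.mkQ (k m) = J.mkQ (j a) := by
      have e1 := LinearMap.congr_fun hk m
      have e2 := LinearMap.congr_fun hh m
      simp only [LinearMap.comp_apply, LinearEquiv.coe_coe, h1] at e1 e2
      exact e1.trans e2
    obtain ⟨b, hb, hb'⟩ := (Submodule.Quotient.eq J).1 h2
    refine ⟨a + b, ?_, ?_⟩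
    · rw [map_add, hb']; abel
    · rw [map_add, LinearMap.mem_ker.1 hb, ha, add_zero]
  let k' : M →ₗ[ℤ] LinearMap.range j := (k ∘ₗ M.subtype).codRestrict _ fun m => by
    obtain ⟨a, ha, _⟩ := key m
    exact ⟨a, ha⟩
  let E := LinearEquiv.ofInjective j hj
  refine ⟨E.symm.toLinearMap ∘ₗ k', ?_⟩
  ext m
  obtain ⟨a, ha, ha'⟩ := key m
  have : E.symm (k' m) = a := by
    rw [LinearEquiv.symm_apply_eq]
    exact Subtype.ext ha.symm
  simp [ha', this]

/-- Key algebraic step: a cocycle is `n` times a cocycle plus a coboundary. -/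
lemma core_aux {P₁ P₀ G H : Type} [AddCommGroup P₁] [AddCommGroup P₀] [AddCommGroup G]
    [AddCommGroup H] [i₁ : Module ℤ P₁] [i₀ : Module ℤ P₀]
    [iG : Module ℤ G] [iH : Module ℤ H]
    [Module.Projective ℤ P₀] [Module.Projective ℤ P₁]
    (hG : ∀ (n : ℕ) (x : G), 1 ≤ n → n • x = 0 → x = 0)
    (d : P₁ →ₗ[ℤ] P₀) (p : P₀ →ₗ[ℤ] G) (hdp : LinearMap.range d = LinearMap.ker p)
    (n : ℕ) (hn : 1 ≤ n) (f : P₁ →ₗ[ℤ] H) (hf : LinearMap.ker d ≤ LinearMap.ker f) :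
    ∃ (g : P₁ →ₗ[ℤ] H) (h : P₀ →ₗ[ℤ] H), LinearMap.ker d ≤ LinearMap.ker g ∧
      f = n • g + h ∘ₗ d := by
  obtain rfl : i₁ = AddCommGroup.toIntModule P₁ := Subsingleton.elim _ _
  obtain rfl : i₀ = AddCommGroup.toIntModule P₀ := Subsingleton.elim _ _
  obtain rfl : iG = AddCommGroup.toIntModule G := Subsingleton.elim _ _
  obtain rfl : iH = AddCommGroup.toIntModule H := Subsingleton.elim _ _
  have hKdiv : ∀ x : P₀, n • x ∈ LinearMap.range d → x ∈ LinearMap.range d := by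
    intro x hx
    rw [hdp, LinearMap.mem_ker, map_nsmul] at hx
    rw [hdp, LinearMap.mem_ker]
    exact hG n _ hn hx
  let φ : P₀ × P₁ →ₗ[ℤ] P₀ := (n • LinearMap.id).coprod d
  have := submodule_projective (LinearMap.range φ)
  obtain ⟨s, hs⟩ := Module.projective_lifting_property φ.rangeRestrict
    (LinearMap.id : LinearMap.range φ →ₗ[ℤ] LinearMap.range φ) φ.surjective_rangeRestrict
  have hs' : ∀ m : LinearMap.range φ, n • (s m).1 + d (s m).2 = m := by
    intro m
    have := congrArg Subtype.val (LinearMap.congr_fun hs m)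
    simpa [φ] using this
  let inP : P₀ →ₗ[ℤ] LinearMap.range φ :=
    φ.rangeRestrict ∘ₗ LinearMap.inl ℤ P₀ P₁
  let inK : P₁ →ₗ[ℤ] LinearMap.range φ :=
    φ.rangeRestrict ∘ₗ LinearMap.inr ℤ P₀ P₁
  have hinP : ∀ x, (inP x : P₀) = n • x := fun x => by simp [inP, φ]
  have hinK : ∀ x, (inK x : P₀) = d x := fun x => by simp [inK, φ]
  let a₀ : P₀ →ₗ[ℤ] P₀ := LinearMap.id - LinearMap.fst ℤ P₀ P₁ ∘ₗ s ∘ₗ inP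
  have ha₀ : ∀ x, a₀ x ∈ LinearMap.range d := by
    intro x
    apply hKdiv
    have := hs' (inP x)
    rw [hinP] at this
    refine ⟨(s (inP x)).2, ?_⟩
    simp only [a₀, LinearMap.sub_apply, LinearMap.id_apply, LinearMap.comp_apply,
      LinearMap.fst_apply, smul_sub]
    rw [← this]; abel
  let b₀ : P₁ →ₗ[ℤ] P₀ := LinearMap.fst ℤ P₀ P₁ ∘ₗ s ∘ₗ inK
  have hb₀ : ∀ x, b₀ x ∈ LinearMap.range d := by
    intro x
    apply hKdiv
    have := hs' (inK x)
    rw [hinK] at this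
    refine ⟨x - (s (inK x)).2, ?_⟩
    simp only [b₀, LinearMap.comp_apply, LinearMap.fst_apply, map_sub]
    rw [← this]; abel
  obtain ⟨η, hη⟩ := Module.projective_lifting_property d.rangeRestrict
    (a₀.codRestrict _ ha₀) d.surjective_rangeRestrict
  obtain ⟨γ, hγ⟩ := Module.projective_lifting_property d.rangeRestrict
    (b₀.codRestrict _ hb₀) d.surjective_rangeRestrict
  have hη' : ∀ x, d (η x) = a₀ x := fun x =>
    congrArg Subtype.val (LinearMap.congr_fun hη x)
  have hγ' : ∀ x, d (γ x) = b₀ x := fun x =>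
    congrArg Subtype.val (LinearMap.congr_fun hγ x)
  have hinK0 : ∀ x, d x = 0 → inK x = 0 := fun x hx => Subtype.ext (by rw [hinK, hx]; rfl)
  refine ⟨f ∘ₗ γ, f ∘ₗ η, ?_, ?_⟩
  · intro x hx
    rw [LinearMap.mem_ker] at hx
    have : γ x ∈ LinearMap.ker d := by
      rw [LinearMap.mem_ker, hγ']
      simp [b₀, hinK0 x hx]
    simpa using hf this
  · ext x
    have key : x - (n • γ x + η (d x)) ∈ LinearMap.ker d := by
      rw [LinearMap.mem_ker, map_sub, map_add, map_nsmul, hη', hγ']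
      have e : inP (d x) = n • inK x := Subtype.ext (by simp [hinP, hinK])
      simp [a₀, b₀, e]
    have := hf key
    rw [LinearMap.mem_ker, map_sub, sub_eq_zero] at this
    simpa using this

lemma homology_div (S : ShortComplex (ModuleCat.{0} ℤ)) (n : ℕ)
    (hS : ∀ f : S.X₂, S.g f = 0 → ∃ (g : S.X₂) (h : S.X₁), S.g g = 0 ∧ f = n • g + S.f h)
    (x : S.homology) : ∃ y : S.homology, n • y = x := by
  obtain ⟨z, rfl⟩ := (ModuleCat.epi_iff_surjective S.homologyπ).1 inferInstance x
  have hz : S.g (S.iCycles z) = 0 := by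
    rw [← ConcreteCategory.comp_apply, S.iCycles_g]; rfl
  obtain ⟨g, h, hg, e⟩ := hS _ hz
  let w : S.cycles := S.moduleCatCyclesIso.inv ⟨g, hg⟩
  refine ⟨S.homologyπ w, ?_⟩
  have : z = n • w + S.toCycles h := by
    apply (ModuleCat.mono_iff_injective S.iCycles).1 inferInstance
    rw [map_add, map_nsmul, e, ← ConcreteCategory.comp_apply, S.toCycles_i]
    congr 2
    exact (S.moduleCatCyclesIso_inv_iCycles_apply ⟨g, hg⟩).symm
  rw [this, map_add, map_nsmul, ← ConcreteCategory.comp_apply S.toCycles, S.toCycles_comp_homologyπ]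
  exact (add_zero _).symm

lemma iso_div {A B : ModuleCat.{0} ℤ} (e : A ≅ B) (n : ℕ)
    (hB : ∀ x : B, ∃ y : B, n • y = x) (x : A) : ∃ y : A, n • y = x := by
  obtain ⟨y, hy⟩ := hB (e.hom x)
  refine ⟨e.inv y, ?_⟩
  rw [← map_nsmul, hy, ← ConcreteCategory.comp_apply, e.hom_inv_id]; rfl

lemma ext1_div (G H : Type) [AddCommGroup G] [AddCommGroup H]
    (hG : ∀ (n : ℕ) (x : G), 1 ≤ n → n • x = 0 → x = 0) (x : Ext1 G H) (n : ℕ) (hn : 1 ≤ n) :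
    ∃ y : Ext1 G H, n • y = x := by
  let P := projectiveResolution (ModuleCat.of ℤ G)
  refine iso_div (P.isoExt 1 (ModuleCat.of ℤ H) ≪≫
    (P.complex.linearYonedaObj ℤ (ModuleCat.of ℤ H)).homologyIsoSc' 0 1 2 (by simp) (by simp))
    n (homology_div _ n ?_) x
  intro (f : P.complex.X 1 ⟶ ModuleCat.of ℤ H) hf
  have hf' : P.complex.d 2 1 ≫ f = 0 := hf
  have : Module.Projective ℤ (P.complex.X 0) :=
    (IsProjective.iff_projective _).2 (P.projective 0)
  have : Module.Projective ℤ (P.complex.X 1) :=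
    (IsProjective.iff_projective _).2 (P.projective 1)
  have e0 := (ShortComplex.moduleCat_exact_iff_range_eq_ker _).1 (ProjectiveResolution.exact₀ P)
  have e1 := (ShortComplex.moduleCat_exact_iff_range_eq_ker _).1 (P.exact_succ 0)
  obtain ⟨g, h, hg, e⟩ := core_aux (G := G) hG (P.complex.d 1 0).hom (P.π.f 0).hom e0 n hn f.hom (by
    intro z hz
    obtain ⟨y, rfl⟩ : z ∈ LinearMap.range (P.complex.d 2 1).hom := e1.ge hz
    exact ConcreteCategory.congr_hom hf' y)
  refine ⟨ModuleCat.ofHom g, ModuleCat.ofHom h, ?_, ?_⟩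
  · change P.complex.d 2 1 ≫ ModuleCat.ofHom g = 0
    ext y
    apply hg
    exact ConcreteCategory.congr_hom (P.complex.d_comp_d 2 1 0) y
  · change f = n • ModuleCat.ofHom g + P.complex.d 1 0 ≫ ModuleCat.ofHom h
    ext y
    exact LinearMap.congr_fun e y

/-- If `G` is torsion-free, then for every abelian group `H` the group `Ext¹(G,H)` is
divisible, and consequently `Pext¹(G,H) = ⋂_{n≥1} n·Ext¹(G,H)` is all of `Ext¹(G,H)`
(and in particular divisible). -/
theorem ext1_divisible_of_torsionFree (G H : Type) [AddCommGroup G] [AddCommGroup H]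
    (hG : ∀ (n : ℕ) (x : G), 1 ≤ n → n • x = 0 → x = 0) :
    (∀ (x : Ext1 G H) (n : ℕ), 1 ≤ n → ∃ y : Ext1 G H, n • y = x) ∧
      Pext1 G H = ⊤ := by
  refine ⟨fun x n hn => ext1_div G H hG x n hn, ?_⟩
  rw [eq_top_iff]
  intro x _
  simp only [Pext1, AddSubgroup.mem_iInf]
  intro n hn
  obtain ⟨y, hy⟩ := ext1_div G H hG x n hn
  exact ⟨y, hy⟩
end

section
/- If the abelian group H is torsion-free, then for every abelian group G the subgroup Pext¹(G,H) = ⋂_{n≥1} n·Ext¹(G,H) is a divisible group: for every x ∈ Pext¹(G,H) and every integer n ≥ 1 there exists y ∈ Pext¹(G,H) with n·y = x. -/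
open CategoryTheory

lemma exists_divisible_embedding (H : Type) [AddCommGroup H] :
    ∃ (D : Type) (_ : AddCommGroup D) (_ : DivisibleBy D ℤ) (j : H →ₗ[ℤ] D),
      Function.Injective j := by
  refine ⟨CharacterModule H → AddCircle (1 : ℚ), inferInstance, inferInstance,
    LinearMap.pi (fun c => AddMonoidHom.toIntLinearMap c), ?_⟩
  rw [← LinearMap.ker_eq_bot, LinearMap.ker_eq_bot']
  intro m hm
  by_contra hne
  obtain ⟨c, hc⟩ := CharacterModule.exists_character_apply_ne_zero_of_ne_zero hne
  exact hc (congrFun hm c)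

lemma ext_div {P H : Type} [AddCommGroup P] [AddCommGroup H] [Module.Projective ℤ P]
    (S : Submodule ℤ P) (n : ℕ) (pure : ∀ p : P, n • p ∈ S → p ∈ S) (φ : S →ₗ[ℤ] H) :
    ∃ (ψ : S →ₗ[ℤ] H) (χ : P →ₗ[ℤ] H), ∀ s : S, φ s = n • ψ s + χ s := by
  obtain ⟨D, _, _, j, hj⟩ := exists_divisible_embedding H
  obtain ⟨F, hF⟩ := (Module.Baer.of_divisible D).extension_property S.subtype
    S.injective_subtype (j.comp φ)
  have hF' : ∀ s : S, F s = j (φ s) := fun s => LinearMap.congr_fun hF s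
  let N := LinearMap.range j
  let _ : DivisibleBy (D ⧸ N) ℤ :=
    Function.Surjective.divisibleBy (α := ℤ) (N.mkQ : D → D ⧸ N) N.mkQ_surjective
      (fun a m => map_zsmul N.mkQ m a)
  let Fb : (P ⧸ S) →ₗ[ℤ] (D ⧸ N) := S.mapQ N F (fun s hs => ⟨φ ⟨s, hs⟩, (hF' ⟨s, hs⟩).symm⟩)
  let mulN : (P ⧸ S) →ₗ[ℤ] (P ⧸ S) := n • LinearMap.id
  have hinj : Function.Injective mulN := by
    rw [← LinearMap.ker_eq_bot, LinearMap.ker_eq_bot']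
    intro m hm
    obtain ⟨p, rfl⟩ := S.mkQ_surjective m
    have : S.mkQ (n • p) = 0 := by rw [map_nsmul]; exact hm
    rw [Submodule.mkQ_apply, Submodule.Quotient.mk_eq_zero] at this ⊢
    exact pure p this
  obtain ⟨θ, hθ⟩ := (Module.Baer.of_divisible (D ⧸ N)).extension_property mulN hinj Fb
  obtain ⟨l, hl⟩ := Module.projective_lifting_property N.mkQ (θ.comp S.mkQ) N.mkQ_surjective
  have hl' : ∀ p, N.mkQ (l p) = θ (S.mkQ p) := fun p => LinearMap.congr_fun hl p
  let e := LinearEquiv.ofInjective j hj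
  have he : ∀ y : N, j (e.symm y) = y := fun y => by
    conv_rhs => rw [← e.apply_symm_apply y]
    rfl
  have h1 : ∀ p, (F - n • l) p ∈ N := by
    intro p
    have h := LinearMap.congr_fun hθ (S.mkQ p)
    have h2 : θ (n • S.mkQ p) = N.mkQ (F p) := h
    rw [map_nsmul, ← hl', ← map_nsmul] at h2
    rw [← Submodule.Quotient.mk_eq_zero, ← Submodule.mkQ_apply]
    simp only [LinearMap.sub_apply, LinearMap.smul_apply, map_sub]
    rw [h2, sub_self]
  have h2 : ∀ s : S, (l.comp S.subtype) s ∈ N := by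
    intro s
    rw [← Submodule.Quotient.mk_eq_zero, ← Submodule.mkQ_apply]
    have : S.mkQ (s : P) = 0 := by simp
    simp only [LinearMap.comp_apply, Submodule.subtype_apply]
    rw [hl', this, map_zero]
  refine ⟨e.symm.toLinearMap.comp ((l.comp S.subtype).codRestrict N h2),
    e.symm.toLinearMap.comp ((F - n • l).codRestrict N h1), fun s => hj ?_⟩
  rw [map_add, map_nsmul]
  simp only [LinearMap.comp_apply, LinearEquiv.coe_coe, he, LinearMap.codRestrict_apply]
  simp [hF']

lemma core {P₀ P₁ H Z E : Type} [AddCommGroup P₀] [AddCommGroup P₁] [AddCommGroup H]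
    [AddCommGroup Z] [AddCommGroup E] [Module.Projective ℤ P₀]
    (hH : ∀ (n : ℕ) (x : H), 1 ≤ n → n • x = 0 → x = 0)
    (d : P₁ →ₗ[ℤ] P₀) (i : Z →+ (P₁ →ₗ[ℤ] H)) (π : Z →+ E) (hπ : Function.Surjective π)
    (hi : ∀ f : P₁ →ₗ[ℤ] H, (∀ q, d q = 0 → f q = 0) → ∃ z, i z = f)
    (hi' : ∀ z q, d q = 0 → i z q = 0)
    (h0 : ∀ z, π z = 0 ↔ ∃ g : P₀ →ₗ[ℤ] H, i z = g.comp d)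
    (x : E) (hx : ∀ n : ℕ, 1 ≤ n → ∃ y, n • y = x) (n : ℕ) (hn : 1 ≤ n) :
    ∃ y : E, (∀ m : ℕ, 1 ≤ m → ∃ w, m • w = y) ∧ n • y = x := by
  obtain ⟨z, rfl⟩ := hπ x
  let S : Submodule ℤ P₀ := AddSubgroup.toIntSubmodule
    { carrier := {p | ∃ k : ℕ, 1 ≤ k ∧ ∃ q, k • p = d q}
      zero_mem' := ⟨1, le_rfl, 0, by simp⟩
      add_mem' := by
        rintro a b ⟨k, hk, q, hq⟩ ⟨k', hk', q', hq'⟩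
        refine ⟨k * k', Nat.mul_pos hk hk', k' • q + k • q', ?_⟩
        rw [map_add, map_nsmul, map_nsmul, ← hq, ← hq', smul_add, smul_smul, smul_smul,
          mul_comm k' k]
      neg_mem' := by
        rintro a ⟨k, hk, q, hq⟩
        exact ⟨k, hk, -q, by rw [smul_neg, hq, map_neg]⟩ }
  have hS : ∀ p, p ∈ S ↔ ∃ k : ℕ, 1 ≤ k ∧ ∃ q, k • p = d q := fun p => Iff.rfl
  have hd : ∀ q, d q ∈ S := fun q => ⟨1, le_rfl, q, one_smul _ _⟩
  have pure : ∀ m : ℕ, 1 ≤ m → ∀ p, m • p ∈ S → p ∈ S := by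
    rintro m hm p ⟨k, hk, q, hq⟩
    exact ⟨k * m, Nat.mul_pos hk hm, q, by rw [mul_smul, hq]⟩
  have inj : ∀ (m : ℕ) (a b : H), 1 ≤ m → m • a = m • b → a = b := by
    intro m a b hm h
    exact sub_eq_zero.1 (hH m _ hm (by rw [smul_sub, h, sub_self]))
  have key : ∀ p : S, ∃ h : H, ∀ (k : ℕ) (q : P₁), 1 ≤ k → k • (p : P₀) = d q →
      k • h = i z q := by
    rintro ⟨p, k₀, hk₀, q₀, hq₀⟩
    obtain ⟨y, hy⟩ := hx k₀ hk₀
    obtain ⟨w, rfl⟩ := hπ y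
    obtain ⟨g, hg⟩ := (h0 (z - k₀ • w)).1 (by rw [map_sub, map_nsmul, hy, sub_self])
    have e0 : k₀ • (i w q₀ + g p) = i z q₀ := by
      have := LinearMap.congr_fun hg q₀
      simp only [map_sub, map_nsmul, LinearMap.sub_apply, LinearMap.smul_apply,
        LinearMap.comp_apply] at this
      rw [← hq₀, map_nsmul, sub_eq_iff_eq_add] at this
      rw [this, smul_add, add_comm]
    refine ⟨i w q₀ + g p, fun k q hk hq => inj k₀ _ _ hk₀ ?_⟩
    have e1 := hi' z (k • q₀ - k₀ • q) (by
      rw [map_sub, map_nsmul, map_nsmul, ← hq₀, ← hq, smul_smul, smul_smul, mul_comm, sub_self])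
    rw [map_sub, map_nsmul, map_nsmul, sub_eq_zero, ← e0] at e1
    rw [← e1, smul_smul, smul_smul, mul_comm]
  choose φ hφ using key
  let Φ : S →ₗ[ℤ] H := AddMonoidHom.toIntLinearMap (AddMonoidHom.mk' φ (by
    rintro a b
    obtain ⟨k, hk, q, hq⟩ := a.2
    obtain ⟨k', hk', q', hq'⟩ := b.2
    have hkk := Nat.mul_pos hk hk'
    refine inj (k * k') _ _ hkk ?_
    rw [smul_add, hφ (a + b) (k * k') (k' • q + k • q') hkk, hφ a (k * k') (k' • q) hkk,
      hφ b (k * k') (k • q') hkk, map_add]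
    · rw [map_nsmul, ← hq', mul_smul]
    · rw [map_nsmul, ← hq, mul_comm, mul_smul]
    · rw [map_add, map_nsmul, map_nsmul, ← hq, ← hq', Submodule.coe_add, smul_add, smul_smul,
        smul_smul, mul_comm k' k]))
  have hΦ : ∀ q, i z q = Φ ⟨d q, hd q⟩ := fun q => by
    have := hφ ⟨d q, hd q⟩ 1 q le_rfl (one_smul _ _)
    rw [one_smul] at this
    exact this.symm
  let dS : P₁ →ₗ[ℤ] S := d.codRestrict S hd
  have step : ∀ (m : ℕ), 1 ≤ m → ∀ (z : Z) (Φ : S →ₗ[ℤ] H), i z = Φ.comp dS →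
      ∃ (w : Z) (Ψ : S →ₗ[ℤ] H), i w = Ψ.comp dS ∧ m • π w = π z := by
    intro m hm z Φ hz
    obtain ⟨Ψ, χ, h⟩ := ext_div S m (pure m hm) Φ
    obtain ⟨w, hw⟩ := hi (Ψ.comp dS) (fun q hq => by
      have : dS q = 0 := Subtype.ext hq
      rw [LinearMap.comp_apply, this, map_zero])
    refine ⟨w, Ψ, hw, ?_⟩
    symm
    rw [← sub_eq_zero, ← map_nsmul, ← map_sub, h0]
    refine ⟨χ, ?_⟩
    ext q
    rw [map_sub, map_nsmul, hz, hw]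
    simp only [LinearMap.sub_apply, LinearMap.smul_apply, LinearMap.comp_apply, h]
    rw [add_sub_cancel_left]
    rfl
  obtain ⟨w, Ψ, hw, hwz⟩ := step n hn z Φ (LinearMap.ext hΦ)
  refine ⟨π w, fun m hm => ?_, hwz⟩
  obtain ⟨w', _, _, h⟩ := step m hm w Ψ hw
  exact ⟨_, h⟩

lemma core' {P₀ P₁ H Z E : Type} [AddCommGroup P₀] [AddCommGroup P₁] [AddCommGroup H]
    [AddCommGroup Z] [AddCommGroup E] [m₀ : Module ℤ P₀] [m₁ : Module ℤ P₁]
    [hP : Module.Projective ℤ P₀]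
    (hH : ∀ (n : ℕ) (x : H), 1 ≤ n → n • x = 0 → x = 0)
    (d : P₁ →ₗ[ℤ] P₀) (i : Z →+ (P₁ →ₗ[ℤ] H)) (π : Z →+ E) (hπ : Function.Surjective π)
    (hi : ∀ f : P₁ →ₗ[ℤ] H, (∀ q, d q = 0 → f q = 0) → ∃ z, i z = f)
    (hi' : ∀ z q, d q = 0 → i z q = 0)
    (h0 : ∀ z, π z = 0 ↔ ∃ g : P₀ →ₗ[ℤ] H, i z = g.comp d)
    (x : E) (hx : ∀ n : ℕ, 1 ≤ n → ∃ y, n • y = x) (n : ℕ) (hn : 1 ≤ n) :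
    ∃ y : E, (∀ m : ℕ, 1 ≤ m → ∃ w, m • w = y) ∧ n • y = x := by
  obtain rfl : m₀ = AddCommGroup.toIntModule P₀ := Subsingleton.elim _ _
  obtain rfl : m₁ = AddCommGroup.toIntModule P₁ := Subsingleton.elim _ _
  exact core hH d i π hπ hi hi' h0 x hx n hn

/-- If the abelian group `H` is torsion-free, then for every abelian group `G`, the
subgroup `Pext¹(G,H) = ⋂_{n≥1} n·Ext¹(G,H)` is divisible: every `x ∈ Pext¹(G,H)` is
`n·y` for some `y ∈ Pext¹(G,H)`, for every `n ≥ 1`. -/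
theorem pext_divisible_of_torsionFree_target (G H : Type) [AddCommGroup G] [AddCommGroup H]
    (hH : ∀ (n : ℕ) (x : H), 1 ≤ n → n • x = 0 → x = 0) :
    ∀ x ∈ Pext1 G H, ∀ n : ℕ, 1 ≤ n → ∃ y ∈ Pext1 G H, n • y = x := by
  have mem : ∀ y : Ext1 G H, y ∈ Pext1 G H ↔ ∀ m : ℕ, 1 ≤ m → ∃ w : Ext1 G H, m • w = y := by
    intro y
    simp only [Pext1, AddSubgroup.mem_iInf, AddMonoidHom.mem_range]
    rfl
  intro x hx n hn
  rw [mem] at hx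
  let P := ProjectiveResolution.of (ModuleCat.of ℤ G)
  let K := P.complex.linearYonedaObj ℤ (ModuleCat.of ℤ H)
  let S := K.sc' 0 1 2
  let e : ((_root_.Ext ℤ (ModuleCat.{0} ℤ) 1).obj (Opposite.op (ModuleCat.of ℤ G))).obj
      (ModuleCat.of ℤ H) ≅ S.moduleCatLeftHomologyData.H :=
    P.isoExt 1 (ModuleCat.of ℤ H) ≪≫
      ShortComplex.homologyMapIso (K.isoSc' 0 1 2 (by simp) (by simp)) ≪≫ S.moduleCatHomologyIso
  let π : LinearMap.ker S.g.hom →ₗ[ℤ] Ext1 G H :=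
    e.toLinearEquiv.symm.toLinearMap.comp (Submodule.mkQ _)
  let i : LinearMap.ker S.g.hom →+ (P.complex.X 1 →ₗ[ℤ] H) :=
    { toFun := fun z => ModuleCat.Hom.hom (z.1 : P.complex.X 1 ⟶ ModuleCat.of ℤ H)
      map_zero' := rfl
      map_add' := fun _ _ => rfl }
  have : Module.Projective ℤ (P.complex.X 0) :=
    (IsProjective.iff_projective _).2 (P.projective 0)
  suffices hs : ∃ y : Ext1 G H, (∀ m : ℕ, 1 ≤ m → ∃ w, m • w = y) ∧ n • y = x by
    obtain ⟨y, hy, hyx⟩ := hs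
    exact ⟨y, (mem y).2 hy, hyx⟩
  refine core' hH (P.complex.d 1 0).hom i π.toAddMonoidHom ?_ ?_ ?_ ?_ x hx n hn
  · exact e.toLinearEquiv.symm.surjective.comp (Submodule.mkQ_surjective _)
  · intro f hf
    refine ⟨⟨(ModuleCat.ofHom f : P.complex.X 1 ⟶ ModuleCat.of ℤ H), ?_⟩, rfl⟩
    refine LinearMap.mem_ker.2 ?_
    change P.complex.d 2 1 ≫ ModuleCat.ofHom f = 0
    ext q
    apply hf
    change (P.complex.d 2 1 ≫ P.complex.d 1 0) q = 0
    simp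
  · intro z q hq
    have hz : P.complex.d 2 1 ≫ (z.1 : P.complex.X 1 ⟶ ModuleCat.of ℤ H) = 0 := z.2
    obtain ⟨r, rfl⟩ := (ShortComplex.moduleCat_exact_iff _).1 (P.exact_succ 0) q hq
    exact congrArg (fun g => ModuleCat.Hom.hom g r) hz
  · intro z
    have h : π z = 0 ↔ ∃ g : S.X₁, S.f.hom g = z.1 := by
      change e.toLinearEquiv.symm _ = 0 ↔ _
      rw [LinearEquiv.map_eq_zero_iff]
      refine (Submodule.Quotient.mk_eq_zero (LinearMap.range S.moduleCatToCycles)).trans ?_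
      constructor
      · rintro ⟨g, hg⟩
        exact ⟨g, congrArg Subtype.val hg⟩
      · rintro ⟨g, hg⟩
        exact ⟨g, Subtype.ext hg⟩
    refine h.trans ⟨?_, ?_⟩
    · rintro ⟨g, hg⟩
      have hg' : P.complex.d 1 0 ≫ (g : P.complex.X 0 ⟶ ModuleCat.of ℤ H) = z.1 := hg
      exact ⟨ModuleCat.Hom.hom (g : P.complex.X 0 ⟶ ModuleCat.of ℤ H),
        (congrArg ModuleCat.Hom.hom hg').symm⟩
    · rintro ⟨g, hg⟩
      exact ⟨(ModuleCat.ofHom g : P.complex.X 0 ⟶ ModuleCat.of ℤ H),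
        ModuleCat.hom_ext hg.symm⟩
end
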